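/- arXiv:2002.07861 — 11 statements merged into one kernel-verified Lean document; each statement's English description precedes it below -/
import Mathlib

section
/- For all positive integers ℓ, m, n there exist x1 > 0 and x2 > 0 such that t1(x1,x2,1) = t2(x1,x2,1) = t3(x1,x2,1). (Equivalently, the C-space M_{ℓ,m,n} = SU(ℓ+m+n)/(SU(ℓ)×SU(m)×SU(n)) admits at least one SU(ℓ+m+n)-invariant Einstein metric.) -/
/-!
The three conditions are homogeneous in `(x1, x2, x3)`, so a solution is sought on the closed
triangle `x1 + x2 + x3 = 1`, `xᵢ ≥ 0`. After multiplication by `4 N x1 x2 x3` the functions `tᵢ`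
become continuous functions `Tᵢ` on the whole triangle, boundary included (the `qᵢ` only need
`n x1² + m x2² + l x3² > 0`). On the side `x3 = 0` the signs of `T1` and `T2` are those of
`x1 - x2` and `x2 - x1`, so `T1 = T2` forces `x1 = x2`, `T1 = T2 = 0` and `T3 > 0`; the other two
sides behave in the same way. At the vertex `x1 = 1` the value `T1` is positive and `T2`, `T3` are
negative, and cyclically. Let `F = T1 + ω T2 + ω² T3` with `ω = exp (2πi/3)`. At the vertices `F`
lies in the open sectors of half-angle `π/3` around `1`, `ω`, `ω²`, and on the side joining the
first two it avoids the ray spanned by `-ω²`, and cyclically. Hence `F` has no zero on the boundary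
and winds around the origin along it, twice in the negative direction. If `F` had no zero in the triangle, it would have a continuous logarithm there
(`exists_continuousOn_log`), and comparing it on each side with a rotated principal logarithm
(`log_sub_eq`) shows that the total variation of its imaginary part along the boundary is both zero
and negative. So `T1 = T2 = T3` at some point of the triangle, which is then interior
(`exists_eq_of_boundary`).
-/


noncomputable section

/-- Component `r1` of the Ricci tensor on the flag manifold
`SU(N)/S(U(ℓ)×U(m)×U(n))`, `N = ℓ+m+n`. -/
def r1 (l m n x1 x2 x3 : ℝ) : ℝ :=
  1 / (2 * x1) + (n / (4 * (l + m + n))) * ((x1 ^ 2 - x2 ^ 2 - x3 ^ 2) / (x1 * x2 * x3))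

def r2 (l m n x1 x2 x3 : ℝ) : ℝ :=
  1 / (2 * x2) + (m / (4 * (l + m + n))) * ((x2 ^ 2 - x1 ^ 2 - x3 ^ 2) / (x1 * x2 * x3))

def r3 (l m n x1 x2 x3 : ℝ) : ℝ :=
  1 / (2 * x3) + (l / (4 * (l + m + n))) * ((x3 ^ 2 - x1 ^ 2 - x2 ^ 2) / (x1 * x2 * x3))

def q1 (l m n x1 x2 x3 : ℝ) : ℝ :=
  (m * x2 ^ 2 + l * x3 ^ 2) / (l * m * (n * x1 ^ 2 + m * x2 ^ 2 + l * x3 ^ 2))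

def q2 (l m n x1 x2 x3 : ℝ) : ℝ :=
  (n * x1 ^ 2 + l * x3 ^ 2) / (l * n * (n * x1 ^ 2 + m * x2 ^ 2 + l * x3 ^ 2))

def q3 (l m n x1 x2 x3 : ℝ) : ℝ :=
  (n * x1 ^ 2 + m * x2 ^ 2) / (m * n * (n * x1 ^ 2 + m * x2 ^ 2 + l * x3 ^ 2))

def t1 (l m n x1 x2 x3 : ℝ) : ℝ := r1 l m n x1 x2 x3 / (1 + q1 l m n x1 x2 x3)

def t2 (l m n x1 x2 x3 : ℝ) : ℝ := r2 l m n x1 x2 x3 / (1 + q2 l m n x1 x2 x3)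

def t3 (l m n x1 x2 x3 : ℝ) : ℝ := r3 l m n x1 x2 x3 / (1 + q3 l m n x1 x2 x3)

/-- A zero-free continuous function on a convex set has a continuous logarithm. -/
lemma exists_continuousOn_log {K : Set (Fin 3 → ℝ)} (hK : Convex ℝ K) (hne : K.Nonempty)
    {f : (Fin 3 → ℝ) → ℂ} (hf : ContinuousOn f K) (h0 : ∀ p ∈ K, f p ≠ 0) :
    ∃ g : K → ℂ, Continuous g ∧ ∀ p : K, Complex.exp (g p) = f p := by
  have := hK.contractibleSpace hne
  have := hK.locallyPathConnectedSpace
  obtain ⟨x, hx⟩ := hne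
  obtain ⟨F, ⟨-, hF⟩, -⟩ := Complex.isCoveringMapOn_exp.existsUnique_continuousMap_lifts
    (⟨fun p : K => f p, continuousOn_iff_continuous_domRestrict.mp hf⟩ : C(K, ℂ))
    (a₀ := ⟨x, hx⟩) (Complex.exp_log (h0 x hx)) (fun p => h0 p p.2)
  exact ⟨F, F.continuous, fun p => congrFun hF p⟩

/-- On a connected set where `w * f` avoids the negative real axis, a continuous logarithm of `f`
differs from the principal logarithm of `w * f` by a constant. -/
lemma log_sub_eq {A : Type*} [TopologicalSpace A] {s : Set A} (hs : IsPreconnected s)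
    {f g : A → ℂ} (hg : Continuous g) (hf : Continuous f) (hgf : ∀ p, Complex.exp (g p) = f p)
    (w : ℂ) (hw : ∀ p ∈ s, w * f p ∈ Complex.slitPlane) {p q : A} (hp : p ∈ s) (hq : q ∈ s) :
    g p - Complex.log (w * f p) = g q - Complex.log (w * f q) := by
  have key : ∀ a ∈ s, Complex.exp (g a - Complex.log (w * f a)) = w⁻¹ := by
    intro a ha
    have h := Complex.slitPlane_ne_zero (hw a ha)
    have hf0 : f a ≠ 0 := right_ne_zero_of_mul h
    have hw0 : w ≠ 0 := left_ne_zero_of_mul h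
    rw [Complex.exp_sub, Complex.exp_log h, hgf]
    field_simp
  refine Complex.isCoveringMap_exp.constOn_of_comp hs
    (g := fun a => g a - Complex.log (w * f a)) ?_ ?_ hp hq
  · exact hg.continuousOn.sub ((continuous_const.mul hf).continuousOn.clog hw)
  · intro a ha b hb
    exact Subtype.ext ((key a ha).trans (key b hb).symm)

/-- The complex number `a + b ω + c ω²`, with `ω = exp (2πi/3)`. -/
def hexMap (a b c : ℝ) : ℂ := ⟨a - (b + c) / 2, √3 / 2 * (b - c)⟩

lemma rot_hexMap (a b c : ℝ) : (⟨-1 / 2, √3 / 2⟩ : ℂ) * hexMap a b c = hexMap c a b := by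
  have h3 : √3 * √3 = 3 := Real.mul_self_sqrt (by norm_num)
  apply Complex.ext
  · simp only [hexMap, Complex.mul_re]
    linear_combination (-(b - c) / 4) * h3
  · simp only [hexMap, Complex.mul_im]
    ring

lemma rot_rot_hexMap (a b c : ℝ) :
    (⟨-1 / 2, √3 / 2⟩ * ⟨-1 / 2, √3 / 2⟩ : ℂ) * hexMap a b c = hexMap b c a := by
  rw [mul_assoc, rot_hexMap, rot_hexMap]

lemma hexMap_mem_slitPlane {a b c : ℝ} (h : b = c → b < a) :
    hexMap a b c ∈ Complex.slitPlane := by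
  rw [Complex.mem_slitPlane_iff]
  by_cases hbc : b = c
  · left
    have := h hbc
    simp only [hexMap]
    linarith
  · right
    have h3 : √3 ≠ 0 := by positivity
    simp only [hexMap]
    exact mul_ne_zero (by positivity) (sub_ne_zero.mpr hbc)

lemma hexMap_ne_zero {a b c : ℝ} (h : ¬ (a = b ∧ b = c)) : hexMap a b c ≠ 0 := by
  intro h0
  have h3 : √3 ≠ 0 := by positivity
  have hr : a - (b + c) / 2 = 0 := congrArg Complex.re h0
  have hi : √3 / 2 * (b - c) = 0 := congrArg Complex.im h0
  have hbc : b - c = 0 := by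
    rcases mul_eq_zero.mp hi with h' | h'
    · exact absurd h' (by positivity)
    · exact h'
  exact h ⟨by linarith, by linarith⟩

lemma log_hexMap_im_pos {a b c : ℝ} (h : c < b) : 0 < (Complex.log (hexMap a b c)).im := by
  have him : 0 < (hexMap a b c).im := by
    have : 0 < b - c := sub_pos.mpr h
    simp only [hexMap]
    positivity
  rw [Complex.log_im]
  rcases (Complex.arg_nonneg_iff.mpr him.le).lt_or_eq with h' | h'
  · exact h'
  · exact absurd (Complex.arg_eq_zero_iff.mp h'.symm).2 him.ne'

lemma log_hexMap_im_neg {a b c : ℝ} (h : b < c) : (Complex.log (hexMap a b c)).im < 0 := by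
  have him : (hexMap a b c).im < 0 := by
    have : b - c < 0 := sub_neg.mpr h
    exact mul_neg_of_pos_of_neg (by positivity) this
  rw [Complex.log_im]
  exact Complex.arg_neg_iff.mpr him

/-- A two-dimensional intermediate value theorem: if, on each side of the triangle, the two
functions indexed by its endpoints can only coincide below the third one, and if at each vertex
the corresponding function is larger than the other two, then the three functions coincide at
some point, because `hexMap T1 T2 T3` winds nontrivially around the origin along the boundary. -/
lemma exists_eq_of_boundary {T1 T2 T3 : (Fin 3 → ℝ) → ℝ}
    (c1 : ContinuousOn T1 (stdSimplex ℝ (Fin 3))) (c2 : ContinuousOn T2 (stdSimplex ℝ (Fin 3)))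
    (c3 : ContinuousOn T3 (stdSimplex ℝ (Fin 3)))
    (s1 : ∀ p ∈ stdSimplex ℝ (Fin 3), p 0 = 0 → T2 p = T3 p → T2 p < T1 p)
    (s2 : ∀ p ∈ stdSimplex ℝ (Fin 3), p 1 = 0 → T3 p = T1 p → T3 p < T2 p)
    (s3 : ∀ p ∈ stdSimplex ℝ (Fin 3), p 2 = 0 → T1 p = T2 p → T1 p < T3 p)
    (v1 : T2 (Pi.single 0 1) < T1 (Pi.single 0 1) ∧ T3 (Pi.single 0 1) < T1 (Pi.single 0 1))
    (v2 : T1 (Pi.single 1 1) < T2 (Pi.single 1 1) ∧ T3 (Pi.single 1 1) < T2 (Pi.single 1 1))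
    (v3 : T1 (Pi.single 2 1) < T3 (Pi.single 2 1) ∧ T2 (Pi.single 2 1) < T3 (Pi.single 2 1)) :
    ∃ p ∈ stdSimplex ℝ (Fin 3), T1 p = T2 p ∧ T2 p = T3 p := by
  by_contra! hno
  have hf : ContinuousOn (fun p => hexMap (T1 p) (T2 p) (T3 p)) (stdSimplex ℝ (Fin 3)) := by
    have e : ∀ a b c : ℝ, hexMap a b c =
        ((a - (b + c) / 2 : ℝ) : ℂ) + ((√3 / 2 * (b - c) : ℝ) : ℂ) * Complex.I :=
      fun a b c => Complex.mk_eq_add_mul_I _ _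
    simp only [e]
    fun_prop
  obtain ⟨g, hg, hgf⟩ := exists_continuousOn_log (convex_stdSimplex ℝ (Fin 3))
    ⟨_, single_mem_stdSimplex ℝ 0⟩ hf
    (fun p hp => hexMap_ne_zero fun h => hno p hp h.1 h.2)
  have hf' := continuousOn_iff_continuous_domRestrict.mp hf
  let V : Fin 3 → stdSimplex ℝ (Fin 3) := fun i => ⟨Pi.single i 1, single_mem_stdSimplex ℝ i⟩
  have side : ∀ i : Fin 3, IsPreconnected {p : stdSimplex ℝ (Fin 3) | p.1 i = 0} := by
    intro i
    have hc : Convex ℝ (stdSimplex ℝ (Fin 3) ∩ {p | p i = 0}) :=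
      (convex_stdSimplex ℝ (Fin 3)).inter
        (convex_hyperplane (LinearMap.isLinear (LinearMap.proj (R := ℝ) i)) 0)
    rw [← Topology.IsInducing.subtypeVal.isPreconnected_image]
    convert hc.isPreconnected using 1
    ext p
    simp [and_comm]
  have e3 := log_sub_eq (side 2) hg hf' hgf ⟨-1 / 2, √3 / 2⟩
    (fun p hp => by
      simp only [Set.domRestrict_apply, rot_hexMap]
      exact hexMap_mem_slitPlane (s3 p p.2 hp))
    (p := V 0) (q := V 1) (by simp [V]) (by simp [V])
  have e1 := log_sub_eq (side 0) hg hf' hgf 1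
    (fun p hp => by
      simp only [Set.domRestrict_apply, one_mul]
      exact hexMap_mem_slitPlane (s1 p p.2 hp))
    (p := V 1) (q := V 2) (by simp [V]) (by simp [V])
  have e2 := log_sub_eq (side 1) hg hf' hgf (⟨-1 / 2, √3 / 2⟩ * ⟨-1 / 2, √3 / 2⟩)
    (fun p hp => by
      simp only [Set.domRestrict_apply, rot_rot_hexMap]
      exact hexMap_mem_slitPlane (s2 p p.2 hp))
    (p := V 2) (q := V 0) (by simp [V]) (by simp [V])
  simp only [Set.domRestrict_apply, rot_rot_hexMap, rot_hexMap, one_mul, V] at e1 e2 e3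
  -- Around the boundary the variations of `g` cancel, which leaves at each vertex the difference
  -- of two principal logarithms, all three with imaginary part of the same sign.
  have hsum := congrArg Complex.im (congrArg₂ (· + ·) (congrArg₂ (· + ·) e1 e2) e3)
  simp only [Complex.add_im, Complex.sub_im] at hsum
  have a1 := log_hexMap_im_pos (a := T3 (Pi.single 0 1)) v1.1
  have a2 := log_hexMap_im_neg (a := T2 (Pi.single 0 1)) v1.2
  have b1 := log_hexMap_im_pos (a := T1 (Pi.single 1 1)) v2.2
  have b2 := log_hexMap_im_neg (a := T3 (Pi.single 1 1)) v2.1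
  have d1 := log_hexMap_im_pos (a := T2 (Pi.single 2 1)) v3.1
  have d2 := log_hexMap_im_neg (a := T1 (Pi.single 2 1)) v3.2
  linarith

/-- On a side of the triangle, parametrized by its coordinates `x, y`, the two quantities attached
to the endpoints have opposite signs, and the third one is positive where they vanish. -/
lemma side_lt {a b c x y A B C : ℝ} (ha : 0 < a) (hb : 0 < b) (hxy : x + y = 1)
    (hA : 0 < A) (hB : 0 < B) (hC : 0 < C)
    (h : a * (x ^ 2 - y ^ 2) / A = b * (y ^ 2 - x ^ 2) / B) :
    a * (x ^ 2 - y ^ 2) / A < (2 * (a + b + c) * (x * y) - c * (x ^ 2 + y ^ 2)) / C := by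
  have h0 : x - y = 0 := by
    have h1 : (x - y) * (a / A + b / B) = 0 := by
      have hx1 : x ^ 2 - y ^ 2 = x - y := by
        linear_combination (x - y) * hxy
      have hx2 : y ^ 2 - x ^ 2 = -(x - y) := by
        linear_combination -(x - y) * hxy
      rw [hx1, hx2] at h
      linear_combination h
    rcases mul_eq_zero.mp h1 with h' | h'
    · exact h'
    · have : 0 < a / A + b / B := by positivity
      exact absurd h' this.ne'
  obtain rfl : x = y := by linarith
  have hx0 : 0 < x := by linarith
  have e : 2 * (a + b + c) * (x * x) - c * (x ^ 2 + x ^ 2) = 2 * (a + b) * x ^ 2 := by ring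
  rw [e, sub_self, mul_zero, zero_div]
  positivity

/-- The quantity `4 N x1 x2 x3 r1`, polynomial in the `xᵢ`; the other two are obtained by permuting
the arguments, `a` being the parameter attached to `x`. -/
def polyR (a b c x y z : ℝ) : ℝ := 2 * (a + b + c) * (y * z) + a * (x ^ 2 - y ^ 2 - z ^ 2)

/-- The common form of the `qᵢ`. -/
def genQ (a b c x y z : ℝ) : ℝ :=
  (b * y ^ 2 + c * z ^ 2) / (b * c * (a * x ^ 2 + b * y ^ 2 + c * z ^ 2))

/-- The quantity `4 N x1 x2 x3 t1`; the other two are obtained by permuting the arguments. -/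
def genT (a b c x y z : ℝ) : ℝ := polyR a b c x y z / (1 + genQ a b c x y z)

lemma one_add_genQ_pos {a b c : ℝ} (ha : 0 < a) (hb : 0 < b) (hc : 0 < c) (x y z : ℝ) :
    0 < 1 + genQ a b c x y z := by
  unfold genQ
  positivity

lemma sum_sq_pos {a b c x y z : ℝ} (ha : 0 < a) (hb : 0 < b) (hc : 0 < c) (h : x + y + z = 1) :
    0 < a * x ^ 2 + b * y ^ 2 + c * z ^ 2 := by
  by_contra! h'
  have h1 : 0 ≤ a * x ^ 2 := by positivity
  have h2 : 0 ≤ b * y ^ 2 := by positivity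
  have h3 : 0 ≤ c * z ^ 2 := by positivity
  have hx : x = 0 := by
    have : a * x ^ 2 = 0 := by linarith
    simpa [ha.ne'] using this
  have hy : y = 0 := by
    have : b * y ^ 2 = 0 := by linarith
    simpa [hb.ne'] using this
  have hz : z = 0 := by
    have : c * z ^ 2 = 0 := by linarith
    simpa [hc.ne'] using this
  simp [hx, hy, hz] at h

lemma continuousOn_genT {a b c : ℝ} (ha : 0 < a) (hb : 0 < b) (hc : 0 < c) {i j k : Fin 3}
    (h : ∀ p ∈ stdSimplex ℝ (Fin 3), p i + p j + p k = 1) :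
    ContinuousOn (fun p : Fin 3 → ℝ => genT a b c (p i) (p j) (p k))
      (stdSimplex ℝ (Fin 3)) := by
  unfold genT
  refine ContinuousOn.div ?_ ?_ fun p hp => (one_add_genQ_pos ha hb hc _ _ _).ne'
  · unfold polyR
    fun_prop
  · unfold genQ
    refine continuousOn_const.add (ContinuousOn.div (by fun_prop) (by fun_prop) fun p hp => ?_)
    have := sum_sq_pos ha hb hc (h p hp)
    positivity

/-- The behaviour of `genT` on the side `z = 0`; the other sides follow by
permuting the arguments cyclically. -/
lemma genT_side {a b c x y z : ℝ} (ha : 0 < a) (hb : 0 < b) (hc : 0 < c)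
    (hz : z = 0) (hxy : x + y = 1)
    (h : genT a b c x y z = genT b c a y z x) : genT a b c x y z < genT c a b z x y := by
  subst hz
  have h1 : polyR a b c x y 0 = a * (x ^ 2 - y ^ 2) := by unfold polyR; ring
  have h2 : polyR b c a y 0 x = b * (y ^ 2 - x ^ 2) := by unfold polyR; ring
  have h3 : polyR c a b 0 x y = 2 * (a + b + c) * (x * y) - c * (x ^ 2 + y ^ 2) := by
    unfold polyR; ring
  unfold genT at h ⊢
  rw [h1, h2] at h
  rw [h1, h3]
  exact side_lt ha hb hxy (one_add_genQ_pos ha hb hc _ _ _)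
    (one_add_genQ_pos hb hc ha _ _ _) (one_add_genQ_pos hc ha hb _ _ _) h

lemma genT_vertex {a b c : ℝ} (ha : 0 < a) (hb : 0 < b) (hc : 0 < c) :
    0 < genT a b c 1 0 0 ∧ genT b c a 0 0 1 < 0 ∧ genT c a b 0 1 0 < 0 := by
  refine ⟨div_pos ?_ (one_add_genQ_pos ha hb hc _ _ _),
    div_neg_of_neg_of_pos ?_ (one_add_genQ_pos hb hc ha _ _ _),
    div_neg_of_neg_of_pos ?_ (one_add_genQ_pos hc ha hb _ _ _)⟩ <;>
  · unfold polyR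
    linarith

lemma t1_eq {l m n x y z : ℝ} (hl : 0 < l) (hm : 0 < m) (hn : 0 < n) (hx : 0 < x) (hy : 0 < y)
    (hz : 0 < z) : t1 l m n (x / z) (y / z) 1 =
      genT n m l x y z * (1 / (4 * (l + m + n) * (x * y))) := by
  have hq : q1 l m n (x / z) (y / z) 1 = genQ n m l x y z := by
    unfold q1 genQ
    field_simp
  have hr : r1 l m n (x / z) (y / z) 1 =
      polyR n m l x y z * (1 / (4 * (l + m + n) * (x * y))) := by
    unfold r1 polyR
    field_simp
    ring
  rw [t1, genT, hq, hr]
  ring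

lemma t2_eq {l m n x y z : ℝ} (hl : 0 < l) (hm : 0 < m) (hn : 0 < n) (hx : 0 < x) (hy : 0 < y)
    (hz : 0 < z) : t2 l m n (x / z) (y / z) 1 =
      genT m l n y z x * (1 / (4 * (l + m + n) * (x * y))) := by
  have hq : q2 l m n (x / z) (y / z) 1 = genQ m l n y z x := by
    unfold q2 genQ
    field_simp
    ring
  have hr : r2 l m n (x / z) (y / z) 1 =
      polyR m l n y z x * (1 / (4 * (l + m + n) * (x * y))) := by
    unfold r2 polyR
    field_simp
    ring
  rw [t2, genT, hq, hr]
  ring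

lemma t3_eq {l m n x y z : ℝ} (hl : 0 < l) (hm : 0 < m) (hn : 0 < n) (hx : 0 < x) (hy : 0 < y)
    (hz : 0 < z) : t3 l m n (x / z) (y / z) 1 =
      genT l n m z x y * (1 / (4 * (l + m + n) * (x * y))) := by
  have hq : q3 l m n (x / z) (y / z) 1 = genQ l n m z x y := by
    unfold q3 genQ
    field_simp
    ring
  have hr : r3 l m n (x / z) (y / z) 1 =
      polyR l n m z x y * (1 / (4 * (l + m + n) * (x * y))) := by
    unfold r3 polyR
    field_simp
    ring
  rw [t3, genT, hq, hr]
  ring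

/-- For all positive integers ℓ, m, n there exist `x1, x2 > 0` with
`t1 (x1,x2,1) = t2 (x1,x2,1) = t3 (x1,x2,1)`; equivalently, the C-space
`M_{ℓ,m,n} = SU(ℓ+m+n)/(SU(ℓ)×SU(m)×SU(n))` admits at least one invariant Einstein metric. -/
theorem exists_invariant_einstein_metric (l m n : ℕ) (hl : 0 < l) (hm : 0 < m) (hn : 0 < n) :
    ∃ x1 x2 : ℝ, 0 < x1 ∧ 0 < x2 ∧
      t1 (l : ℝ) (m : ℝ) (n : ℝ) x1 x2 1 = t2 (l : ℝ) (m : ℝ) (n : ℝ) x1 x2 1 ∧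
      t2 (l : ℝ) (m : ℝ) (n : ℝ) x1 x2 1 = t3 (l : ℝ) (m : ℝ) (n : ℝ) x1 x2 1 := by
  have hl' : (0 : ℝ) < l := Nat.cast_pos.mpr hl
  have hm' : (0 : ℝ) < m := Nat.cast_pos.mpr hm
  have hn' : (0 : ℝ) < n := Nat.cast_pos.mpr hn
  have hsum : ∀ p ∈ stdSimplex ℝ (Fin 3), p 0 + p 1 + p 2 = 1 := fun p hp => by
    rw [← Fin.sum_univ_three]
    exact hp.2
  have s1 : ∀ p ∈ stdSimplex ℝ (Fin 3), p 0 = 0 →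
      genT m l n (p 1) (p 2) (p 0) = genT l n m (p 2) (p 0) (p 1) →
      genT m l n (p 1) (p 2) (p 0) < genT n m l (p 0) (p 1) (p 2) := fun p hp h0 =>
    genT_side hm' hl' hn' h0 (by linarith [hsum p hp])
  have s2 : ∀ p ∈ stdSimplex ℝ (Fin 3), p 1 = 0 →
      genT l n m (p 2) (p 0) (p 1) = genT n m l (p 0) (p 1) (p 2) →
      genT l n m (p 2) (p 0) (p 1) < genT m l n (p 1) (p 2) (p 0) := fun p hp h0 =>
    genT_side hl' hn' hm' h0 (by linarith [hsum p hp])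
  have s3 : ∀ p ∈ stdSimplex ℝ (Fin 3), p 2 = 0 →
      genT n m l (p 0) (p 1) (p 2) = genT m l n (p 1) (p 2) (p 0) →
      genT n m l (p 0) (p 1) (p 2) < genT l n m (p 2) (p 0) (p 1) := fun p hp h0 =>
    genT_side hn' hm' hl' h0 (by linarith [hsum p hp])
  obtain ⟨hw1a, hw1b, hw1c⟩ := genT_vertex hn' hm' hl'
  obtain ⟨hw2a, hw2b, hw2c⟩ := genT_vertex hm' hl' hn'
  obtain ⟨hw3a, hw3b, hw3c⟩ := genT_vertex hl' hn' hm'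
  obtain ⟨p, hp, h12, h23⟩ := exists_eq_of_boundary
    (T1 := fun p => genT n m l (p 0) (p 1) (p 2)) (T2 := fun p => genT m l n (p 1) (p 2) (p 0))
    (T3 := fun p => genT l n m (p 2) (p 0) (p 1))
    (continuousOn_genT hn' hm' hl' hsum)
    (continuousOn_genT hm' hl' hn' fun p hp => by linarith [hsum p hp])
    (continuousOn_genT hl' hn' hm' fun p hp => by linarith [hsum p hp])
    s1 s2 s3
    (by simpa using ⟨hw1b.trans hw1a, hw1c.trans hw1a⟩)
    (by simpa using ⟨hw2c.trans hw2a, hw2b.trans hw2a⟩)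
    (by simpa using ⟨hw3b.trans hw3a, hw3c.trans hw3a⟩)
  -- No solution lies on the boundary, by the strict inequalities on the sides.
  have p0 : 0 < p 0 := (hp.1 0).lt_of_ne' fun h =>
    (s1 p hp h h23).ne (h12.symm)
  have p1 : 0 < p 1 := (hp.1 1).lt_of_ne' fun h =>
    (s2 p hp h (h12.trans h23).symm).ne h23.symm
  have p2 : 0 < p 2 := (hp.1 2).lt_of_ne' fun h =>
    (s3 p hp h h12).ne (h12.trans h23)
  refine ⟨p 0 / p 2, p 1 / p 2, by positivity, by positivity, ?_, ?_⟩
  · rw [t1_eq hl' hm' hn' p0 p1 p2, t2_eq hl' hm' hn' p0 p1 p2]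
    exact congrArg (· * _) h12
  · rw [t2_eq hl' hm' hn' p0 p1 p2, t3_eq hl' hm' hn' p0 p1 p2]
    exact congrArg (· * _) h23
end
end

section
/- Let m < n be positive integers and take ℓ = m. Then there exist α ∈ (0,1) and β ∈ (1,2) such that t1(α,1,1) = t2(α,1,1) = t3(α,1,1) and t1(β,1,1) = t2(β,1,1) = t3(β,1,1). Moreover α and β are roots of the quartic H1(x) = −n²(m²+mn+1)x⁴ + 2mn²(2m+n)x³ − mn(2m²+6mn+7)x² + 4(m²+1)n(2m+n)x − 4m²(2mn+1). (Equivalently, for m < n the C-space M_{m,m,n} = SU(2m+n)/(SU(m)×SU(m)×SU(n)) admits at least two invariant Einstein metrics of the form (α,1,1) and (β,1,1).) -/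
noncomputable section

/-- The quartic `H1` governing the normalized Einstein equation on `M_{m,m,n}` along
`x2 = x3 = 1`. -/
def H1 (m n x : ℝ) : ℝ :=
  -n ^ 2 * (m ^ 2 + m * n + 1) * x ^ 4 + 2 * m * n ^ 2 * (2 * m + n) * x ^ 3
    - m * n * (2 * m ^ 2 + 6 * m * n + 7) * x ^ 2 + 4 * (m ^ 2 + 1) * n * (2 * m + n) * x
    - 4 * m ^ 2 * (2 * m * n + 1)

theorem continuous_H1 (m n : ℝ) : Continuous (H1 m n) := by
  unfold H1
  fun_prop

theorem t2_eq_t3 (m n x : ℝ) : t2 m m n x 1 1 = t3 m m n x 1 1 := by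
  unfold t2 t3 r2 r3 q2 q3
  ring

/-- Cross-multiplying `t1 = t2` at `(x,1,1)` leaves a nonzero multiple of `H1(x) = 0`. -/
theorem t1_eq_t2_of_H1_eq_zero {m n x : ℝ} (hm : 0 < m) (hn : 0 < n) (hx : 0 < x)
    (h : H1 m n x = 0) : t1 m m n x 1 1 = t2 m m n x 1 1 := by
  have hr1 : r1 m m n x 1 1 = (4 * m + n * x ^ 2) / (4 * (2 * m + n) * x) := by
    unfold r1
    field_simp
    ring
  have hr2 : r2 m m n x 1 1 = (2 * (2 * m + n) - m * x) / (4 * (2 * m + n)) := by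
    unfold r2
    field_simp
    ring
  have hq1 : 1 + q1 m m n x 1 1
      = (m * (n * x ^ 2 + 2 * m) + 2) / (m * (n * x ^ 2 + 2 * m)) := by
    unfold q1
    field_simp
    ring
  have hq2 : 1 + q2 m m n x 1 1
      = (m * n * (n * x ^ 2 + 2 * m) + n * x ^ 2 + m) / (m * n * (n * x ^ 2 + 2 * m)) := by
    unfold q2
    field_simp
    ring
  unfold t1 t2
  rw [hr1, hr2, hq1, hq2]
  unfold H1 at h
  have h1 : m * (n * x ^ 2 + 2 * m) + 2 ≠ 0 := by positivity
  have h2 : m * n * (n * x ^ 2 + 2 * m) + n * x ^ 2 + m ≠ 0 := by positivity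
  have h3 : n * x ^ 2 + 2 * m ≠ 0 := by positivity
  have h4 : 2 * m + n ≠ 0 := by positivity
  rw [div_div_div_eq, div_div_div_eq, div_eq_div_iff (by positivity) (by positivity)]
  linear_combination
    (-(4 * (2 * m + n) * m * (n * x ^ 2 + 2 * m))) * h

/-- For `m < n` the C-space `M_{m,m,n} = SU(2m+n)/(SU(m)×SU(m)×SU(n))` admits at least two
invariant Einstein metrics of the form `(α,1,1)` and `(β,1,1)`, with `α ∈ (0,1)`, `β ∈ (1,2)`
roots of the quartic `H1`. -/
theorem exists_two_einstein_metrics_of_lt (m n : ℕ) (hm : 0 < m) (hn : 0 < n) (hmn : m < n) :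
    ∃ α β : ℝ, 0 < α ∧ α < 1 ∧ 1 < β ∧ β < 2 ∧
      H1 (m : ℝ) (n : ℝ) α = 0 ∧ H1 (m : ℝ) (n : ℝ) β = 0 ∧
      t1 (m : ℝ) (m : ℝ) (n : ℝ) α 1 1 = t2 (m : ℝ) (m : ℝ) (n : ℝ) α 1 1 ∧
      t2 (m : ℝ) (m : ℝ) (n : ℝ) α 1 1 = t3 (m : ℝ) (m : ℝ) (n : ℝ) α 1 1 ∧
      t1 (m : ℝ) (m : ℝ) (n : ℝ) β 1 1 = t2 (m : ℝ) (m : ℝ) (n : ℝ) β 1 1 ∧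
      t2 (m : ℝ) (m : ℝ) (n : ℝ) β 1 1 = t3 (m : ℝ) (m : ℝ) (n : ℝ) β 1 1 := by
  have hm' : (0 : ℝ) < m := by exact_mod_cast hm
  have hn' : (0 : ℝ) < n := by exact_mod_cast hn
  have hd : (0 : ℝ) < n - m := sub_pos.mpr (by exact_mod_cast hmn)
  have h0 : H1 (m : ℝ) n 0 < 0 := by
    have e : H1 (m : ℝ) n 0 = -(4 * m ^ 2 * (2 * m * n + 1)) := by unfold H1; ring
    rw [e]
    exact neg_neg_of_pos (by positivity)
  have h1 : 0 < H1 (m : ℝ) n 1 := by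
    have e : H1 (m : ℝ) n 1
        = m * n * (n - m) * (n + 2 * m) + (n - m) * (3 * n + 4 * m) := by
      unfold H1; ring
    rw [e]
    positivity
  have h2 : H1 (m : ℝ) n 2 < 0 := by
    have e : H1 (m : ℝ) n 2 = -(4 * (m + n) * (m + 2 * n)) := by unfold H1; ring
    rw [e]
    exact neg_neg_of_pos (by positivity)
  obtain ⟨α, ⟨hα0, hα1⟩, hα⟩ := intermediate_value_Ioo (zero_le_one' ℝ)
    (continuous_H1 (m : ℝ) n).continuousOn ⟨h0, h1⟩
  obtain ⟨β, ⟨hβ1, hβ2⟩, hβ⟩ := intermediate_value_Ioo' (one_le_two (α := ℝ))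
    (continuous_H1 (m : ℝ) n).continuousOn ⟨h2, h1⟩
  exact ⟨α, β, hα0, hα1, hβ1, hβ2, hα, hβ,
    t1_eq_t2_of_H1_eq_zero hm' hn' hα0 hα, t2_eq_t3 _ _ _,
    t1_eq_t2_of_H1_eq_zero hm' hn' (one_pos.trans hβ1) hβ, t2_eq_t3 _ _ _⟩
end
end

section
/- Let m > n be positive integers and take ℓ = m. Then there exist γ ∈ (0,1) and positive reals ν, μ such that t1(ν,γ,1) = t2(ν,γ,1) = t3(ν,γ,1) and t1(μ,1/γ,1) = t2(μ,1/γ,1) = t3(μ,1/γ,1). (Equivalently, for m > n the C-space M_{m,m,n} = SU(2m+n)/(SU(m)×SU(m)×SU(n)) admits at least two invariant Einstein metrics, of the form (ν,γ,1) and (μ,1/γ,1) with 0 < γ < 1.) -/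
/-!
With `ℓ = m` the Einstein equations at `(x, y, 1)` are symmetric under `y ↦ 1/y` up to scaling, and
this is made visible by the coordinates `u = x / (1 + y)` and `p = y / (1 + y)²`, both of which are
invariant under `(x, y) ↦ (x / y, 1 / y)`. After removing the factor `1 - y`, the equation
`t2 = t3` becomes `curveEq m n u p = 0`, which is *linear* in `p`, and (given `t2 = t3`) the
remaining equation becomes `traceEq m n u p = 0` (`einstein_of_curve`). A common zero with `0 < u`
and `0 < p < 1/4` therefore gives some `y ∈ (0, 1)` with `p = y / (1 + y)²`, and both `y` and `1/y`
yield Einstein metrics.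

To find the common zero, solve `curveEq = 0` for `p` as a function of `u`. On `u > m / (2m + n)`
it increases from `-∞`, takes the value `0` at some `u₀` and the value `1/4` at some `u₁ ∈ (u₀, 1)`.
Along this curve `traceEq` is negative at `u₀` (every term has a definite sign) and positive at `u₁`
(`traceEq_pos`; this is where `n < m` enters), so it vanishes in between.
-/

noncomputable section

/-! ### Reduction to the scale-invariant coordinates -/

/-- The equation `t2 = t3` at `(x, y, 1)` with the trivial factor `1 - y` removed, written in the
coordinates `u = x / (1 + y)`, `p = y / (1 + y)²`. -/
def curveEq (m n u p : ℝ) : ℝ :=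
  2 * ((2 * m + n) * u - m) * (n * (m * n + 1) * u ^ 2 + m ^ 2 * n) - m ^ 2 * (1 - u ^ 2)
    - p * (2 * m * (2 * m * n + 1) * ((2 * m + n) * u - m))

/-- The equation `r1 * ((1 + q2) + (1 + q3)) = (r2 + r3) * (1 + q1)` at `(x, y, 1)`, cleared of
denominators and written in the coordinates `u = x / (1 + y)`, `p = y / (1 + y)²`. -/
def traceEq (m n u p : ℝ) : ℝ :=
  (2 * (2 * m + n) * p + n * (u ^ 2 - (1 - 2 * p)))
      * (2 * n * (m * n + 1) * u ^ 2 + (2 * m ^ 2 * n + m) * (1 - 2 * p))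
    - (2 * (2 * m + n) * u - 2 * m * u ^ 2) * n * (m * n * u ^ 2 + (m ^ 2 + 1) * (1 - 2 * p))

/-- Solutions of the reduced system are Einstein metrics. Since `p` is unchanged by `y ↦ 1 / y`,
this applies to `y` and `1 / y` at once. -/
lemma einstein_of_curve {m n u p y : ℝ} (hm : 0 < m) (hn : 0 < n) (hu : 0 < u) (hy : 0 < y)
    (hp : p * (1 + y) ^ 2 = y) (hQ : curveEq m n u p = 0) (hH : traceEq m n u p = 0) :
    t1 m m n (u * (1 + y)) y 1 = t2 m m n (u * (1 + y)) y 1 ∧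
      t2 m m n (u * (1 + y)) y 1 = t3 m m n (u * (1 + y)) y 1 := by
  have hw : (1 - 2 * p) * (1 + y) ^ 2 = 1 + y ^ 2 := by linear_combination -2 * hp
  have hx : 0 < u * (1 + y) := by positivity
  unfold curveEq at hQ
  unfold traceEq at hH
  have kQ : 2 * ((2 * m + n) * u - m) * (n * (m * n + 1) * u ^ 2 + m ^ 2 * n) * (1 + y) ^ 2
      - m ^ 2 * (1 - u ^ 2) * (1 + y) ^ 2
      - y * (2 * m * (2 * m * n + 1) * ((2 * m + n) * u - m)) = 0 := by
    linear_combination (1 + y) ^ 2 * hQ + 2 * m * (2 * m * n + 1) * ((2 * m + n) * u - m) * hp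
  have kH : (2 * (2 * m + n) * (p * (1 + y) ^ 2)
        + n * ((u * (1 + y)) ^ 2 - (1 - 2 * p) * (1 + y) ^ 2))
      * (2 * n * (m * n + 1) * (u * (1 + y)) ^ 2
        + (2 * m ^ 2 * n + m) * ((1 - 2 * p) * (1 + y) ^ 2))
      - (2 * (2 * m + n) * (u * (1 + y)) * (1 + y) - 2 * m * (u * (1 + y)) ^ 2) * n
        * (m * n * (u * (1 + y)) ^ 2 + (m ^ 2 + 1) * ((1 - 2 * p) * (1 + y) ^ 2)) = 0 := by
    linear_combination (1 + y) ^ 4 * hH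
  rw [hp, hw] at kH
  have kF : (1 - y) * (1 + y) * (2 * ((2 * m + n) * u - m) *
      (n * (m * n + 1) * u ^ 2 + m ^ 2 * n) * (1 + y) ^ 2
      - m ^ 2 * (1 - u ^ 2) * (1 + y) ^ 2
      - y * (2 * m * (2 * m * n + 1) * ((2 * m + n) * u - m))) = 0 := by rw [kQ, mul_zero]
  clear hQ hH hw kQ
  generalize hX : u * (1 + y) = x at *
  -- `Rᵢ / Bᵢ` is `tᵢ` up to a common positive factor
  obtain ⟨D, hD⟩ : ∃ D, D = n * x ^ 2 + m * y ^ 2 + m := ⟨_, rfl⟩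
  obtain ⟨R1, hR1⟩ : ∃ R, R = 2 * (2 * m + n) * y + n * (x ^ 2 - y ^ 2 - 1) := ⟨_, rfl⟩
  obtain ⟨R2, hR2⟩ : ∃ R, R = 2 * (2 * m + n) * x + m * (y ^ 2 - x ^ 2 - 1) := ⟨_, rfl⟩
  obtain ⟨R3, hR3⟩ : ∃ R, R = 2 * (2 * m + n) * x * y + m * (1 - x ^ 2 - y ^ 2) := ⟨_, rfl⟩
  obtain ⟨B1, hB1⟩ : ∃ B, B = n * (m * D + y ^ 2 + 1) := ⟨_, rfl⟩
  obtain ⟨B2, hB2⟩ : ∃ B, B = m * n * D + n * x ^ 2 + m := ⟨_, rfl⟩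
  obtain ⟨B3, hB3⟩ : ∃ B, B = m * n * D + n * x ^ 2 + m * y ^ 2 := ⟨_, rfl⟩
  have D0 : 0 < D := by rw [hD]; positivity
  have B10 : 0 < B1 := by rw [hB1]; positivity
  have B20 : 0 < B2 := by rw [hB2]; positivity
  have B30 : 0 < B3 := by rw [hB3]; positivity
  have c23 : R2 * B3 = R3 * B2 := by
    rw [hR2, hR3, hB2, hB3, hD, ← hX]
    linear_combination kF
  have csum : R1 * (B2 + B3) = (R2 + R3) * B1 := by
    rw [hR1, hR2, hR3, hB1, hB2, hB3, hD]
    linear_combination kH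
  have c12 : R1 * B2 = R2 * B1 := by
    have : (B2 + B3) * (R1 * B2 - R2 * B1) = 0 := by
      linear_combination B2 * csum - B1 * c23
    rcases mul_eq_zero.1 this with h | h <;> linarith
  have f1 : t1 m m n x y 1 = m * n * D / (4 * (2 * m + n) * x * y) * (R1 / B1) := by
    have h1 : r1 m m n x y 1 = R1 / (4 * (2 * m + n) * x * y) := by
      rw [r1, hR1]; field_simp; ring
    have h2 : 1 + q1 m m n x y 1 = B1 / (m * n * D) := by
      rw [q1, hB1, show n * x ^ 2 + m * y ^ 2 + m * 1 ^ 2 = D by rw [hD]; ring]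
      field_simp; ring
    rw [t1, h1, h2]; field_simp
  have f2 : t2 m m n x y 1 = m * n * D / (4 * (2 * m + n) * x * y) * (R2 / B2) := by
    have h1 : r2 m m n x y 1 = R2 / (4 * (2 * m + n) * x * y) := by
      rw [r2, hR2]; field_simp; ring
    have h2 : 1 + q2 m m n x y 1 = B2 / (m * n * D) := by
      rw [q2, hB2, show n * x ^ 2 + m * y ^ 2 + m * 1 ^ 2 = D by rw [hD]; ring]
      field_simp; ring
    rw [t2, h1, h2]; field_simp
  have f3 : t3 m m n x y 1 = m * n * D / (4 * (2 * m + n) * x * y) * (R3 / B3) := by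
    have h1 : r3 m m n x y 1 = R3 / (4 * (2 * m + n) * x * y) := by
      rw [r3, hR3]; field_simp; ring
    have h2 : 1 + q3 m m n x y 1 = B3 / (m * n * D) := by
      rw [q3, hB3, show n * x ^ 2 + m * y ^ 2 + m * 1 ^ 2 = D by rw [hD]; ring]
      field_simp; ring
    rw [t3, h1, h2]; field_simp
  rw [f1, f2, f3, (div_eq_div_iff B10.ne' B20.ne').2 c12, (div_eq_div_iff B20.ne' B30.ne').2 c23]
  exact ⟨rfl, rfl⟩

/-! ### Sign of the second equation at `p = 1/4` -/

/-- Along the curve `curveEq = 0`, the second equation is positive at `p = 1/4` (that is, at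
`y = 1`). -/
lemma traceEq_pos {m n : ℕ} (hn : 0 < n) (hmn : n < m) {u : ℝ} (hu : (m : ℝ) < (2 * m + n) * u)
    (hu1 : u < 1) (hQ : curveEq m n u (1 / 4) = 0) : 0 < traceEq m n u (1 / 4) := by
  have hn' : (1 : ℝ) ≤ n := by exact_mod_cast hn
  have hm' : (n : ℝ) + 1 ≤ m := by exact_mod_cast hmn
  have hsplit : (n = 1 ∧ m = 2) ∨ (n = 1 ∧ 3 ≤ m) ∨ 2 ≤ n := by omega
  have hs : ((n : ℝ) = 1 ∧ (m : ℝ) = 2) ∨ ((n : ℝ) = 1 ∧ (3 : ℝ) ≤ m) ∨ (2 : ℝ) ≤ n := by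
    exact_mod_cast hsplit
  generalize (m : ℝ) = m at *
  generalize (n : ℝ) = n at *
  have hm0 : 0 < m := by linarith
  have hn0 : 0 < n := by linarith
  have hu0 : 0 < u := by
    by_contra h
    nlinarith
  unfold curveEq at hQ
  unfold traceEq
  rcases hs with ⟨rfl, rfl⟩ | hs
  · -- here `u` is a root of `30 u³ - 8 u² + 15 u - 10`, which forces `1/2 < u`
    have h5 : 1 / 2 < u := by
      by_contra h
      push Not at h
      nlinarith [mul_nonneg hu0.le (sub_nonneg.2 h), mul_nonneg (sq_nonneg u) (sub_nonneg.2 h)]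
    nlinarith [sq_nonneg u, mul_pos hu0 (sub_pos.2 hu1), mul_pos (sub_pos.2 h5) (sub_pos.2 hu1),
      mul_pos (mul_pos hu0 hu0) (sub_pos.2 h5), mul_pos (mul_pos hu0 hu0) (sub_pos.2 hu1)]
  have hm3 : 3 ≤ m := by rcases hs with ⟨_, h⟩ | h <;> linarith
  -- The curve equation bounds the offset `d` of `u` from `m / (2m + n)`. Apart from the terms in
  -- `d`, the quantity is increasing in `v = u²`, so a lower bound on `v` suffices.
  obtain ⟨d, hd⟩ : ∃ d, d = (2 * m + n) * u - m := ⟨_, rfl⟩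
  obtain ⟨v, hv⟩ : ∃ v, v = u ^ 2 := ⟨_, rfl⟩
  have d0 : 0 < d := by linarith
  have v0 : 0 < v := by rw [hv]; positivity
  have hv1 : v ≤ 1 := by rw [hv]; nlinarith
  have hQ' : d * (2 * m * n ^ 2 * v + m ^ 2 * n + 2 * n * v)
      = m * (m + d / 2 - m * v) := by
    rw [hd, hv]; linear_combination hQ
  have hdn : d * n ≤ 6 / 5 := by
    have h1 : d * (m * n - 1 / 2) ≤ m := by
      have h2 : m * (d * (m * n - 1 / 2)) ≤ m * m := by
        have : 0 ≤ d * (2 * m * n ^ 2 * v + 2 * n * v) + m * m * v := by positivity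
        linear_combination hQ' + this
      exact le_of_mul_le_mul_left h2 hm0
    have h3 : 3 ≤ m * n := by nlinarith
    have h4 : m * (d * n) * (5 / 6) ≤ m := by nlinarith
    have h5 : m * (d * n * (5 / 6)) ≤ m * 1 := by linarith
    have := le_of_mul_le_mul_left h5 hm0
    linarith
  have hH : (2 * (2 * m + n) * (1 / 4) + n * (u ^ 2 - (1 - 2 * (1 / 4))))
      * (2 * n * (m * n + 1) * u ^ 2 + (2 * m ^ 2 * n + m) * (1 - 2 * (1 / 4)))
    - (2 * (2 * m + n) * u - 2 * m * u ^ 2) * n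
      * (m * n * u ^ 2 + (m ^ 2 + 1) * (1 - 2 * (1 / 4)))
    = (m ^ 2 * n + 2 * m * n ^ 2 * v) * (m + n) * v + 7 / 2 * n * m * v + m ^ 2 * v
      + 2 * n ^ 2 * v ^ 2 - n * m - m ^ 2 / 2 - d * n - d * m / 2 + 2 * n * v * d := by
    have : (2 * m + n) * u = d + m := by rw [hd]; ring
    rw [mul_assoc 2 (2 * m + n) u, this, ← hv]
    linear_combination -hQ'
  rw [hH]
  have hnv : 0 < n * v * d := by positivity
  rcases hs with ⟨rfl, _⟩ | hn2
  · have hu3 : 3 / 7 ≤ u := by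
      by_contra h
      push Not at h
      have : (2 * m + 1) * u ≤ (2 * m + 1) * (3 / 7) := by gcongr
      linarith
    have hv3 : 9 / 49 ≤ v := by
      have := pow_le_pow_left₀ (by norm_num) hu3 2
      rw [hv]; linarith
    have a1 : (m ^ 2 + 2 * m * (9 / 49)) * (m + 1) * (9 / 49)
        ≤ (m ^ 2 + 2 * m * v) * (m + 1) * v := by
      gcongr
    have a2 : m * (9 / 49) ≤ m * v := by gcongr
    have a3 : m ^ 2 * (9 / 49) ≤ m ^ 2 * v := by gcongr
    have a4 : d * m ≤ 6 / 5 * m := by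
      have : d ≤ 6 / 5 := by linarith
      gcongr
    have a5 : ((9 : ℝ) / 49) ^ 2 ≤ v ^ 2 := by gcongr
    obtain ⟨k, rfl⟩ : ∃ k, m = 3 + k := ⟨m - 3, by ring⟩
    have k0 : 0 ≤ k := by linarith
    have fin : 0 < ((3 + k) ^ 2 + 2 * (3 + k) * (9 / 49)) * (3 + k + 1) * (9 / 49)
        + 7 / 2 * ((3 + k) * (9 / 49)) + (3 + k) ^ 2 * (9 / 49) + 2 * ((9 : ℝ) / 49) ^ 2
        - (3 + k) - (3 + k) ^ 2 / 2 - 6 / 5 - 6 / 5 * (3 + k) / 2 := by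
      ring_nf
      positivity
    linarith
  · have hu3 : 1 / 3 ≤ u := by
      by_contra h
      push Not at h
      have : (2 * m + n) * u ≤ (2 * m + n) * (1 / 3) := by gcongr
      linarith
    have hv3 : 1 / 9 ≤ v := by
      have := pow_le_pow_left₀ (by norm_num) hu3 2
      rw [hv]; linarith
    have a1 : (m ^ 2 * n + 2 * m * n ^ 2 * (1 / 9)) * (m + n) * (1 / 9)
        ≤ (m ^ 2 * n + 2 * m * n ^ 2 * v) * (m + n) * v := by
      gcongr
    have a2 : n * m * (1 / 9) ≤ n * m * v := by gcongr
    have a3 : m ^ 2 * (1 / 9) ≤ m ^ 2 * v := by gcongr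
    have a4 : d * m ≤ 3 / 5 * m := by
      have h2 : d * 2 ≤ d * n := by gcongr
      have : d ≤ 3 / 5 := by linarith
      gcongr
    have a5 : n ^ 2 * ((1 : ℝ) / 9) ^ 2 ≤ n ^ 2 * v ^ 2 := by gcongr
    obtain ⟨j, rfl⟩ : ∃ j, n = 2 + j := ⟨n - 2, by ring⟩
    obtain ⟨k, rfl⟩ : ∃ k, m = 3 + j + k := ⟨m - 3 - j, by ring⟩
    have k0 : 0 ≤ k := by linarith
    have j0 : 0 ≤ j := by linarith
    have fin : 0 < ((3 + j + k) ^ 2 * (2 + j) + 2 * (3 + j + k) * (2 + j) ^ 2 * (1 / 9))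
        * (3 + j + k + (2 + j)) * (1 / 9) + 7 / 2 * ((2 + j) * (3 + j + k) * (1 / 9))
        + (3 + j + k) ^ 2 * (1 / 9) + 2 * ((2 + j) ^ 2 * (1 / 9) ^ 2) - (2 + j) * (3 + j + k)
        - (3 + j + k) ^ 2 / 2 - 6 / 5 - 3 / 5 * (3 + j + k) / 2 := by
      ring_nf
      positivity
    linarith

/-! ### Existence of a common zero -/

/-- For `p ≤ 1/4`, `curveEq` is strictly increasing in `u` to the right of `m / (2m + n)`. -/
lemma curveEq_lt {m n u v p : ℝ} (hm : 1 ≤ m) (hn : 1 ≤ n) (hp : p ≤ 1 / 4) (hu0 : 0 < u)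
    (hu : m < (2 * m + n) * u) (huv : u < v) : curveEq m n u p < curveEq m n v p := by
  unfold curveEq
  have hm0 : 0 < m := by linarith
  have hn0 : 0 < n := by linarith
  have e1 : (2 * m + n) * u - m < (2 * m + n) * v - m := by gcongr
  have e2 : u ^ 2 < v ^ 2 := by gcongr
  have e3 : 0 < m ^ 2 * n - p * (m * (2 * m * n + 1)) := by
    have h : p * (m * (2 * m * n + 1)) ≤ 1 / 4 * (m * (2 * m * n + 1)) := by gcongr
    have h1 : m * 1 ≤ m * (m * n) := by
      have : 1 ≤ m * n := by nlinarith
      gcongr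
    nlinarith
  have e4 : ((2 * m + n) * u - m)
        * (n * (m * n + 1) * u ^ 2 + (m ^ 2 * n - p * (m * (2 * m * n + 1))))
      ≤ ((2 * m + n) * v - m)
        * (n * (m * n + 1) * v ^ 2 + (m ^ 2 * n - p * (m * (2 * m * n + 1)))) := by
    have : 0 ≤ (2 * m + n) * v - m := by linarith
    gcongr
  have e5 : m ^ 2 * u ^ 2 < m ^ 2 * v ^ 2 := by gcongr
  linear_combination 2 * e4 + e5

/-- The reduced system has a solution with `0 < p < 1/4`. -/
lemma exists_common_zero {m n : ℕ} (hn : 0 < n) (hmn : n < m) :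
    ∃ u p : ℝ, 0 < u ∧ 0 < p ∧ p < 1 / 4 ∧ curveEq m n u p = 0 ∧ traceEq m n u p = 0 := by
  have hpos := @traceEq_pos m n hn hmn
  have hn' : (1 : ℝ) ≤ n := by exact_mod_cast hn
  have hm' : (n : ℝ) + 1 ≤ m := by exact_mod_cast hmn
  generalize (m : ℝ) = m at *
  generalize (n : ℝ) = n at *
  have hm0 : 0 < m := by linarith
  have hn0 : 0 < n := by linarith
  have hN : 0 < 2 * m + n := by linarith
  have cont : ∀ p, Continuous fun u => curveEq m n u p := by
    intro p; unfold curveEq; fun_prop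
  obtain ⟨a, ha⟩ : ∃ a, a = m / (2 * m + n) := ⟨_, rfl⟩
  have haN : (2 * m + n) * a = m := by rw [ha]; field_simp
  have a0 : 0 < a := by rw [ha]; positivity
  have a1 : a < 1 := by rw [ha, div_lt_one hN]; linarith
  have hgt : ∀ u, a < u → m < (2 * m + n) * u := by
    intro u h
    calc m = (2 * m + n) * a := haN.symm
      _ < _ := by gcongr
  have Qa : ∀ p, curveEq m n a p < 0 := by
    intro p
    have : curveEq m n a p = - (m ^ 2 * (1 - a ^ 2)) := by
      unfold curveEq; rw [haN]; ring
    rw [this]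
    have : 0 < 1 - a ^ 2 := by nlinarith
    have : 0 < m ^ 2 * (1 - a ^ 2) := by positivity
    linarith
  have Q1 : 0 < curveEq m n 1 (1 / 4) := by
    have : curveEq m n 1 (1 / 4)
        = (m + n) * (2 * n * (m * n + 1) + m * (m * n - 1 / 2)) := by
      unfold curveEq; ring
    rw [this]
    have : 0 < m * n - 1 / 2 := by nlinarith
    positivity
  obtain ⟨u1, ⟨hau1, hu11⟩, hQu1⟩ := intermediate_value_Ioo a1.le (cont (1 / 4)).continuousOn
    ⟨Qa _, Q1⟩
  have hQ10 : 0 < curveEq m n u1 0 := by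
    have h1 := hgt u1 hau1
    have h2 : curveEq m n u1 0
        = curveEq m n u1 (1 / 4) + m * (2 * m * n + 1) * ((2 * m + n) * u1 - m) / 2 := by
      unfold curveEq; ring
    have h3 : 0 < (2 * m + n) * u1 - m := by linarith
    simp only at hQu1
    rw [h2, hQu1]
    positivity
  obtain ⟨u0, ⟨hau0, hu01⟩, hQu0⟩ := intermediate_value_Ioo hau1.le (cont 0).continuousOn
    ⟨Qa _, hQ10⟩
  simp only at hQu1 hQu0
  -- `f u` is the solution `p` of the linear equation `curveEq m n u p = 0`
  obtain ⟨f, hf⟩ : ∃ f : ℝ → ℝ, f = fun u => curveEq m n u 0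
    / (2 * m * (2 * m * n + 1) * ((2 * m + n) * u - m)) := ⟨_, rfl⟩
  have hden : ∀ u, a < u → 0 < 2 * m * (2 * m * n + 1) * ((2 * m + n) * u - m) := by
    intro u h
    have : 0 < (2 * m + n) * u - m := by linarith [hgt u h]
    positivity
  have hlin : ∀ u p, curveEq m n u p
      = curveEq m n u 0 - p * (2 * m * (2 * m * n + 1) * ((2 * m + n) * u - m)) := by
    intro u p; unfold curveEq; ring
  have hfQ : ∀ u, a < u → curveEq m n u (f u) = 0 := by
    intro u h
    rw [hlin, hf]
    simp only
    rw [div_mul_cancel₀ _ (hden u h).ne', sub_self]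
  have hf0 : f u0 = 0 := by rw [hf]; simp [hQu0]
  have hf1 : f u1 = 1 / 4 := by
    rw [hf]
    simp only
    rw [div_eq_iff (hden u1 hau1).ne']
    linarith [hlin u1 (1 / 4)]
  have fcont : ContinuousOn f (Set.Icc u0 u1) := by
    rw [hf]
    refine (cont 0).continuousOn.div (by fun_prop) ?_
    intro u hu
    exact (hden u (lt_of_lt_of_le hau0 hu.1)).ne'
  have Hcont : ContinuousOn (fun u => traceEq m n u (f u)) (Set.Icc u0 u1) := by
    unfold traceEq; fun_prop
  have H1 : 0 < traceEq m n u1 (f u1) := by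
    rw [hf1]; exact hpos (hgt u1 hau1) hu11 hQu1
  have H0 : traceEq m n u0 (f u0) < 0 := by
    have h00 : 0 < u0 := by linarith
    have h1 : 0 < 1 - u0 ^ 2 := by nlinarith
    have h2 : 0 < 2 * m + n - m * u0 := by nlinarith
    have h3 : traceEq m n u0 (f u0)
        = -(n * (1 - u0 ^ 2) * (2 * n * (m * n + 1) * u0 ^ 2 + (2 * m ^ 2 * n + m))
          + 2 * u0 * (2 * m + n - m * u0) * n * (m * n * u0 ^ 2 + (m ^ 2 + 1))) := by
      rw [hf0]; unfold traceEq; ring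
    rw [h3, neg_lt_zero]
    positivity
  obtain ⟨u, ⟨hu0, hu1⟩, hu⟩ := intermediate_value_Ioo hu01.le Hcont ⟨H0, H1⟩
  have hau : a < u := hau0.trans hu0
  refine ⟨u, f u, by linarith, ?_, ?_, hfQ u hau, hu⟩
  · have h := curveEq_lt (p := 0) (by linarith) hn' (by norm_num) (by linarith) (hgt u0 hau0) hu0
    rw [hQu0] at h
    rw [hf]
    exact div_pos h (hden u hau)
  · have h := curveEq_lt (p := 1 / 4) (by linarith) hn' le_rfl (by linarith) (hgt u hau) hu1
    rw [hQu1, hlin] at h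
    rw [hf]
    simp only
    rw [div_lt_iff₀ (hden u hau)]
    linarith

/-! ### The two metrics -/

/-- For `m > n` the C-space `M_{m,m,n} = SU(2m+n)/(SU(m)×SU(m)×SU(n))` admits at least two
invariant Einstein metrics, of the form `(ν,γ,1)` and `(μ,1/γ,1)` with `0 < γ < 1`. -/
theorem exists_two_einstein_metrics_of_gt (m n : ℕ) (hm : 0 < m) (hn : 0 < n) (hmn : n < m) :
    ∃ γ ν μ : ℝ, 0 < γ ∧ γ < 1 ∧ 0 < ν ∧ 0 < μ ∧
      t1 (m : ℝ) (m : ℝ) (n : ℝ) ν γ 1 = t2 (m : ℝ) (m : ℝ) (n : ℝ) ν γ 1 ∧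
      t2 (m : ℝ) (m : ℝ) (n : ℝ) ν γ 1 = t3 (m : ℝ) (m : ℝ) (n : ℝ) ν γ 1 ∧
      t1 (m : ℝ) (m : ℝ) (n : ℝ) μ (1 / γ) 1 = t2 (m : ℝ) (m : ℝ) (n : ℝ) μ (1 / γ) 1 ∧
      t2 (m : ℝ) (m : ℝ) (n : ℝ) μ (1 / γ) 1 = t3 (m : ℝ) (m : ℝ) (n : ℝ) μ (1 / γ) 1 := by
  obtain ⟨u, p, hu, hp0, hp1, hQ, hH⟩ := exists_common_zero hn hmn
  have hm' : (0 : ℝ) < m := by exact_mod_cast hm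
  have hn' : (0 : ℝ) < n := by exact_mod_cast hn
  have hc : Continuous fun y : ℝ => y - p * (1 + y) ^ 2 := by fun_prop
  obtain ⟨y, ⟨hy0, hy1⟩, hy⟩ := intermediate_value_Ioo zero_le_one hc.continuousOn
    (show (0 : ℝ) ∈ Set.Ioo _ _ from ⟨by simpa using hp0, by linarith⟩)
  simp only at hy
  have hpy : p * (1 + y) ^ 2 = y := by linarith
  have hpy' : p * (1 + 1 / y) ^ 2 = 1 / y := by
    field_simp
    linear_combination hpy
  have hy' : 0 < 1 / y := by positivity
  obtain ⟨h1, h2⟩ := einstein_of_curve hm' hn' hu hy0 hpy hQ hH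
  obtain ⟨h3, h4⟩ := einstein_of_curve hm' hn' hu hy' hpy' hQ hH
  exact ⟨y, u * (1 + y), u * (1 + 1 / y), hy0, hy1, by positivity, by positivity, h1, h2, h3, h4⟩
end
end

section
/- Let n ≥ 2 be an integer, take ℓ = m = n, and let α be the unique real root of h1(x) = (2n²+1)x³ − (4n²−1)x² + 4(n²+2)x − 4(2n²+1). Then the set of pairs (x1,x2) of positive reals satisfying t1(x1,x2,1) = t2(x1,x2,1) = t3(x1,x2,1) is exactly {(1,1), (α,1), (1,α), (1/α,1/α)}. (Equivalently, for n ≥ 2 there exist exactly four SU(3n)-invariant Einstein metrics of the considered form on the C-space M_{n,n,n} = SU(3n)/(SU(n)×SU(n)×SU(n)).) -/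
/-!
Write `S = a² + b² + c²`. For `ℓ = m = n` the quantities `t1`, `t2`, `t3` are obtained from one
another by permuting the arguments, and `t1(a, b, c)` is a symmetric positive factor times
`(6bc + 2a² - S) / ((n² + 1)S - a²)`. Cross-multiplying, `t1 = t2` becomes `(a - b) F(a, b, c) = 0`
for a cubic form `F` (`pairForm`), and similarly for the other pairs (`t1_eq_swap_iff`).

Moreover `F(a, b, c) - F(b, c, a)` is `a - c` times a form that is positive on positive
triples (`pairForm_eq_imp`). Hence `a`, `b`, `c` cannot be pairwise distinct. Once two of them
agree, the only remaining equation is that the third one is equal to them as well, or that its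
ratio to them is a root of `h1`, because `F(x, 1, 1) = h1(x)`.
-/

noncomputable section

/-- The cubic arising from the Einstein equation on `M_{n,n,n}` after normalization. -/
def h1 (n x : ℝ) : ℝ :=
  (2 * n ^ 2 + 1) * x ^ 3 - (4 * n ^ 2 - 1) * x ^ 2 + 4 * (n ^ 2 + 2) * x
    - 4 * (2 * n ^ 2 + 1)

/-- The cofactor of `a - b` in the equation `t1 = t2` for the metric `(a, b, c)`,
cleared of denominators, in the case `ℓ = m = n`. -/
def pairForm (n a b c : ℝ) : ℝ :=
  (2 * n ^ 2 + 1) * (a ^ 2 + b ^ 2 + c ^ 2) * (a + b)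
    - 6 * c * (n ^ 2 + 1) * (a ^ 2 + b ^ 2 + c ^ 2) + 6 * c * (a ^ 2 + a * b + b ^ 2)

lemma t2_eq_t1 (n a b c : ℝ) : t2 n n n a b c = t1 n n n b a c := by
  have h : n * a ^ 2 + n * b ^ 2 + n * c ^ 2 = n * b ^ 2 + n * a ^ 2 + n * c ^ 2 := by ring
  simp only [t1, t2, r1, r2, q1, q2, h, mul_comm a b]

lemma t3_eq_t1 (n a b c : ℝ) : t3 n n n a b c = t1 n n n c a b := by
  have h : n * a ^ 2 + n * b ^ 2 + n * c ^ 2 = n * c ^ 2 + n * a ^ 2 + n * b ^ 2 := by ring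
  have h' : a * b * c = c * a * b := by ring
  simp only [t1, t3, r1, r3, q1, q3, h, h']

lemma t1_comm (n a b c : ℝ) : t1 n n n a b c = t1 n n n a c b := by
  have h : n * a ^ 2 + n * b ^ 2 + n * c ^ 2 = n * a ^ 2 + n * c ^ 2 + n * b ^ 2 := by ring
  have h' : a * b * c = a * c * b := by ring
  simp only [t1, r1, q1, h, h', add_comm (n * b ^ 2), sub_right_comm _ (b ^ 2)]

lemma denom_pos {n a b c : ℝ} (hn : 0 < n) (ha : 0 < a) (hb : 0 < b) :
    0 < (n ^ 2 + 1) * (a ^ 2 + b ^ 2 + c ^ 2) - a ^ 2 := by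
  have : (n ^ 2 + 1) * (a ^ 2 + b ^ 2 + c ^ 2) - a ^ 2
      = n ^ 2 * (a ^ 2 + b ^ 2 + c ^ 2) + b ^ 2 + c ^ 2 := by ring
  rw [this]
  positivity

lemma t1_eq_s3 {n a b c : ℝ} (hn : 0 < n) (ha : 0 < a) (hb : 0 < b) (hc : 0 < c) :
    t1 n n n a b c = n ^ 2 * (a ^ 2 + b ^ 2 + c ^ 2) / (12 * (a * b * c)) *
      ((6 * b * c + a ^ 2 - b ^ 2 - c ^ 2) /
        ((n ^ 2 + 1) * (a ^ 2 + b ^ 2 + c ^ 2) - a ^ 2)) := by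
  have hD := denom_pos (c := c) hn ha hb
  have hS : 0 < a ^ 2 + b ^ 2 + c ^ 2 := by positivity
  have hr : r1 n n n a b c = (6 * b * c + a ^ 2 - b ^ 2 - c ^ 2) / (12 * (a * b * c)) := by
    unfold r1
    field_simp
    ring
  have hq : 1 + q1 n n n a b c = ((n ^ 2 + 1) * (a ^ 2 + b ^ 2 + c ^ 2) - a ^ 2) /
      (n ^ 2 * (a ^ 2 + b ^ 2 + c ^ 2)) := by
    have h : n * n * (n * a ^ 2 + n * b ^ 2 + n * c ^ 2)
        = n * (n ^ 2 * (a ^ 2 + b ^ 2 + c ^ 2)) := by ring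
    unfold q1
    rw [h]
    field_simp
    ring
  rw [t1, hr, hq]
  field_simp

lemma t1_eq_swap_iff {n a b c : ℝ} (hn : 0 < n) (ha : 0 < a) (hb : 0 < b) (hc : 0 < c) :
    t1 n n n a b c = t1 n n n b a c ↔ a = b ∨ pairForm n a b c = 0 := by
  have hS : 0 < a ^ 2 + b ^ 2 + c ^ 2 := by positivity
  have hs : b ^ 2 + a ^ 2 + c ^ 2 = a ^ 2 + b ^ 2 + c ^ 2 := by ring
  have hA := denom_pos (c := c) hn ha hb
  have hB := denom_pos (c := c) hn hb ha
  rw [t1_eq_s3 hn ha hb hc, t1_eq_s3 hn hb ha hc, mul_comm b a, hs]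
  rw [hs] at hB
  have hk : n ^ 2 * (a ^ 2 + b ^ 2 + c ^ 2) / (12 * (a * b * c)) ≠ 0 := by positivity
  rw [mul_right_inj' hk, div_eq_div_iff hA.ne' hB.ne', ← sub_eq_zero, ← sub_eq_zero (a := a),
    ← mul_eq_zero]
  unfold pairForm
  ring_nf

/-- Two of the cofactors can vanish together only if the corresponding variables agree:
their difference is `(a - c) * ((8n² + 7)(a² + b² + c²) + 6(ac - b²))`. -/
lemma pairForm_eq_imp {n a b c : ℝ} (ha : 0 < a) (hc : 0 < c)
    (h : pairForm n a b c = 0) (h' : pairForm n b c a = 0) : a = c := by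
  have hpos : 0 < (8 * n ^ 2 + 7) * (a ^ 2 + b ^ 2 + c ^ 2) + 6 * (a * c - b ^ 2) := by
    have : (8 * n ^ 2 + 7) * (a ^ 2 + b ^ 2 + c ^ 2) + 6 * (a * c - b ^ 2)
        = 8 * n ^ 2 * (a ^ 2 + b ^ 2 + c ^ 2) + 7 * a ^ 2 + 7 * c ^ 2 + b ^ 2 + 6 * (a * c) := by
      ring
    rw [this]
    positivity
  have hmul : (a - c) * ((8 * n ^ 2 + 7) * (a ^ 2 + b ^ 2 + c ^ 2) + 6 * (a * c - b ^ 2)) = 0 := by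
    unfold pairForm at h h'
    linear_combination h - h'
  rcases mul_eq_zero.1 hmul with h0 | h0
  · linarith
  · exact absurd h0 hpos.ne'

/-- A real root of `h1` is positive, since all terms of `h1` are nonpositive on `x ≤ 0` and the
constant term is negative. -/
lemma h1_root_pos {n x : ℝ} (hn : 1 ≤ n) (h : h1 n x = 0) : 0 < x := by
  by_contra! hx
  unfold h1 at h
  have e1 : 0 ≤ (2 * n ^ 2 + 1) * ((-x) * x ^ 2) :=
    mul_nonneg (by positivity) (mul_nonneg (by linarith) (sq_nonneg x))
  have e2 : 0 ≤ (4 * n ^ 2 - 1) * x ^ 2 := mul_nonneg (by nlinarith) (sq_nonneg x)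
  have e3 : 0 ≤ (n ^ 2 + 2) * (-x) := mul_nonneg (by positivity) (by linarith)
  nlinarith [sq_nonneg n]

/-- For `n ≥ 2`, with `α` the unique real root of `h1`, the set of pairs `(x1,x2)` of
positive reals with `t1(x1,x2,1) = t2(x1,x2,1) = t3(x1,x2,1)` is exactly
`{(1,1), (α,1), (1,α), (1/α,1/α)}`; equivalently, `M_{n,n,n} = SU(3n)/(SU(n)³)` admits
exactly four invariant Einstein metrics of the considered form. -/
theorem einstein_metrics_M_nnn (n : ℕ) (hn : 2 ≤ n) (α : ℝ)
    (hroot : h1 (n : ℝ) α = 0) (huniq : ∀ x : ℝ, h1 (n : ℝ) x = 0 → x = α) :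
    {p : ℝ × ℝ | 0 < p.1 ∧ 0 < p.2 ∧
        t1 (n : ℝ) (n : ℝ) (n : ℝ) p.1 p.2 1 = t2 (n : ℝ) (n : ℝ) (n : ℝ) p.1 p.2 1 ∧
        t2 (n : ℝ) (n : ℝ) (n : ℝ) p.1 p.2 1 = t3 (n : ℝ) (n : ℝ) (n : ℝ) p.1 p.2 1} =
      {(1, 1), (α, 1), (1, α), (1 / α, 1 / α)} := by
  have hn1 : (1 : ℝ) ≤ n := by exact_mod_cast (by omega : 1 ≤ n)
  have hn0 : (0 : ℝ) < n := by linarith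
  have hα := h1_root_pos hn1 hroot
  -- The equations in factored form.
  have key : ∀ x y : ℝ, 0 < x → 0 < y →
      ((t1 (n : ℝ) n n x y 1 = t2 (n : ℝ) n n x y 1 ∧
        t2 (n : ℝ) n n x y 1 = t3 (n : ℝ) n n x y 1) ↔
      ((x = y ∨ pairForm n x y 1 = 0) ∧ (y = 1 ∨ pairForm n y 1 x = 0))) := by
    intro x y hx hy
    rw [t2_eq_t1, t3_eq_t1, t1_eq_swap_iff hn0 hx hy one_pos, t1_comm _ y x 1, t1_comm _ 1 x y,
      t1_eq_swap_iff hn0 hy one_pos hx]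
  ext ⟨x, y⟩
  simp only [Set.mem_ofPred_eq, Set.mem_insert_iff, Set.mem_singleton_iff, Prod.mk.injEq]
  constructor
  · rintro ⟨hx, hy, h⟩
    rw [key x y hx hy] at h
    obtain ⟨rfl | hxy, rfl | hy1⟩ := h
    · exact Or.inl ⟨rfl, rfl⟩
    · -- By homogeneity `(x, x, 1)` is the triple `(1, 1, 1 / x)` up to scale.
      have : 1 / x = α := huniq _ (by
        unfold pairForm at hy1
        unfold h1
        field_simp
        linear_combination hy1)
      have : x = 1 / α := by rw [← this, one_div_one_div]
      exact Or.inr (Or.inr (Or.inr ⟨this, this⟩))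
    · have : x = α := huniq _ (by
        unfold pairForm at hxy
        unfold h1
        linear_combination hxy)
      exact Or.inr (Or.inl ⟨this, rfl⟩)
    · obtain rfl : x = 1 := pairForm_eq_imp hx one_pos hxy hy1
      have : y = α := huniq _ (by
        unfold pairForm at hxy
        unfold h1
        linear_combination hxy)
      exact Or.inr (Or.inr (Or.inl ⟨rfl, this⟩))
  · unfold h1 at hroot
    rintro (⟨rfl, rfl⟩ | ⟨rfl, rfl⟩ | ⟨rfl, rfl⟩ | ⟨rfl, rfl⟩)
    · exact ⟨one_pos, one_pos, (key _ _ one_pos one_pos).2 ⟨Or.inl rfl, Or.inl rfl⟩⟩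
    · refine ⟨hα, one_pos, (key _ _ hα one_pos).2 ⟨Or.inr ?_, Or.inl rfl⟩⟩
      unfold pairForm
      linear_combination hroot
    · refine ⟨one_pos, hα, (key _ _ one_pos hα).2 ⟨Or.inr ?_, Or.inr ?_⟩⟩ <;>
      · unfold pairForm
        linear_combination hroot
    · have hα' : 0 < 1 / α := by positivity
      refine ⟨hα', hα', (key _ _ hα' hα').2 ⟨Or.inl rfl, Or.inr ?_⟩⟩
      unfold pairForm
      field_simp
      linear_combination hroot
end
end

section
/- Take ℓ = m = n = 1. Then the only pair (x1,x2) of positive reals satisfying t1(x1,x2,1) = t2(x1,x2,1) = t3(x1,x2,1) is (x1,x2) = (1,1). (Equivalently, among the invariant metrics of the considered form on the C-space M_{1,1,1} = SU(3), only the bi-invariant metric is Einstein.) -/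
/-!
Write `x, y, z` for `x1, x2, x3` and `S = x² + y² + z²`. For `ℓ = m = n = 1`
one has `1 + q₁ = (2S - x²) / S` and
`r₁ = (6yz + 2x² - S) / (12xyz)`, so `t₁ = t₂` amounts to
`(S + 2yz) (2S - y²) = (S + 2xz) (2S - x²)`, which factors as `(x - y) F_z = 0` with
`F_z = S (x + y - 2z) - 2z³ + 2xyz` (`factor_of_quot_eq`); similarly, `t₂ = t₃` gives
`(y - z) F_x = 0`, where `F_x = S (y + z - 2x) - 2x³ + 2xyz`.

If `F_z = F_x = 0`, then `x = z`, because `F_z - F_x` is `x - z` times a positive quadratic form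
(`eq_of_factors`). So two of the variables always coincide, and then a factor `F` attached to one
of these two becomes a difference of variables times a positive form (`eq_of_factor_diag`), which
forces the third variable to agree as well.
-/

noncomputable section

/-- Cross-multiplied form of `tᵢ = tⱼ`. With `S = x² + y² + z²`, the expression
`6xyz tᵢ / S` is `(6bc + 2a² - S) / (2 (2S - a²)) = 3 (S + 2bc) / (2 (2S - a²)) - 1`, where `a` is
the `i`-th variable and `b`, `c` are the others; so `tᵢ = tⱼ` is an equality of the quotients
`(S + 2bc) / (2S - a²)`, and the difference of the variables `x`, `y` factors out. -/
lemma factor_of_quot_eq {x y z : ℝ} (h : (x ^ 2 + y ^ 2 + z ^ 2 + 2 * y * z) *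
      (2 * x ^ 2 + y ^ 2 + 2 * z ^ 2) =
      (x ^ 2 + y ^ 2 + z ^ 2 + 2 * x * z) * (x ^ 2 + 2 * y ^ 2 + 2 * z ^ 2)) :
    x = y ∨ (x ^ 2 + y ^ 2 + z ^ 2) * (x + y - 2 * z) - 2 * z ^ 3 + 2 * x * y * z = 0 := by
  have h' : (x - y) *
      ((x ^ 2 + y ^ 2 + z ^ 2) * (x + y - 2 * z) - 2 * z ^ 3 + 2 * x * y * z) = 0 := by
    linear_combination h
  rcases mul_eq_zero.mp h' with h0 | h0
  · exact Or.inl (sub_eq_zero.mp h0)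
  · exact Or.inr h0

/-- Two of the cubic factors cannot vanish at once unless the corresponding variables agree: their
difference is `(x - z)` times a positive quadratic form. -/
lemma eq_of_factors {x y z : ℝ} (hx : 0 < x) (hy : 0 < y) (hz : 0 < z)
    (h1 : (x ^ 2 + y ^ 2 + z ^ 2) * (x + y - 2 * z) - 2 * z ^ 3 + 2 * x * y * z = 0)
    (h2 : (x ^ 2 + y ^ 2 + z ^ 2) * (y + z - 2 * x) - 2 * x ^ 3 + 2 * x * y * z = 0) :
    x = z := by
  have h : (x - z) * (3 * (x ^ 2 + y ^ 2 + z ^ 2) + 2 * (x ^ 2 + x * z + z ^ 2)) = 0 := by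
    linear_combination h1 - h2
  rcases mul_eq_zero.mp h with h0 | h0
  · exact sub_eq_zero.mp h0
  · exact absurd h0 (by positivity)

/-- If the variable singled out by a cubic factor equals one of the others, the factor vanishes
only when all three variables agree. -/
lemma eq_of_factor_diag {x y : ℝ} (hx : 0 < x)
    (h : (x ^ 2 + y ^ 2 + x ^ 2) * (x + y - 2 * x) - 2 * x ^ 3 + 2 * x * y * x = 0) :
    y = x := by
  have h' : (y - x) * (4 * x ^ 2 + y ^ 2) = 0 := by linear_combination h
  rcases mul_eq_zero.mp h' with h0 | h0
  · exact sub_eq_zero.mp h0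
  · exact absurd h0 (by positivity)

/-- For `ℓ = m = n = 1` (the C-space `M_{1,1,1} = SU(3)`), the only pair `(x1,x2)` of positive
reals with `t1(x1,x2,1) = t2(x1,x2,1) = t3(x1,x2,1)` is `(1,1)`: among the invariant metrics
of the considered form, only the bi-invariant metric is Einstein. -/
theorem einstein_metric_SU3 (x1 x2 : ℝ) (hx1 : 0 < x1) (hx2 : 0 < x2) :
    (t1 1 1 1 x1 x2 1 = t2 1 1 1 x1 x2 1 ∧ t2 1 1 1 x1 x2 1 = t3 1 1 1 x1 x2 1) ↔
      (x1 = 1 ∧ x2 = 1) := by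
  constructor
  · rintro ⟨h12, h23⟩
    have e12 : (x1 ^ 2 + x2 ^ 2 + 1 ^ 2 + 2 * x2 * 1) * (2 * x1 ^ 2 + x2 ^ 2 + 2 * 1 ^ 2) =
        (x1 ^ 2 + x2 ^ 2 + 1 ^ 2 + 2 * x1 * 1) * (x1 ^ 2 + 2 * x2 ^ 2 + 2 * 1 ^ 2) := by
      have hS : 0 < x1 ^ 2 + x2 ^ 2 + 1 := by positivity
      simp only [t1, t2, r1, r2, q1, q2] at h12
      field_simp at h12
      linarith
    have e23 : (x2 ^ 2 + 1 ^ 2 + x1 ^ 2 + 2 * 1 * x1) * (2 * x2 ^ 2 + 1 ^ 2 + 2 * x1 ^ 2) =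
        (x2 ^ 2 + 1 ^ 2 + x1 ^ 2 + 2 * x2 * x1) * (x2 ^ 2 + 2 * 1 ^ 2 + 2 * x1 ^ 2) := by
      have hS : 0 < x1 ^ 2 + x2 ^ 2 + 1 := by positivity
      simp only [t2, t3, r2, r3, q2, q3] at h23
      field_simp at h23
      linarith
    rcases factor_of_quot_eq e12 with rfl | f3
    · rcases factor_of_quot_eq e23 with rfl | f1
      · exact ⟨rfl, rfl⟩
      · have := eq_of_factor_diag hx1 (y := 1) (by linear_combination f1)
        exact ⟨this.symm, this.symm⟩
    · rcases factor_of_quot_eq e23 with rfl | f1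
      · exact ⟨eq_of_factor_diag one_pos (by linear_combination f3), rfl⟩
      · obtain rfl := eq_of_factors hx1 hx2 one_pos f3 (by linear_combination f1)
        exact ⟨rfl, eq_of_factor_diag one_pos f3⟩
  · rintro ⟨rfl, rfl⟩
    norm_num [t1, t2, t3, r1, r2, r3, q1, q2, q3]
end
end

section
/- For all positive integers ℓ, m, n there exist real numbers ε and L with 0 < ε < L such that for every t ∈ [0,1] and every point (x1,x2) on the boundary of the square [ε,L]² (i.e. x1 ∈ {ε,L} and ε ≤ x2 ≤ L, or x2 ∈ {ε,L} and ε ≤ x1 ≤ L), it is not the case that T1(t,x1,x2,1) = T2(t,x1,x2,1) = T3(t,x1,x2,1). -/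
/-!
After clearing the common factor `4 N x1 x2 x3`, the system `T1 = T2 = T3` reads
`R_i = μ * a_i` for `i = 1, 2, 3`, where `R_1 = 2 N x2 x3 + n (x1² - x2² - x3²)` (and cyclically,
with coefficients `m`, `l`) and `a_i = 1 + t q_i` lies in `[1, 2]`. The system is homogeneous and
invariant under permuting the pairs `(x1, n)`, `(x2, m)`, `(x3, l)`, so it suffices to bound
the ratio of the largest coordinate `z` to another one, `x` (`le_of_max`).

For `z` maximal the corresponding `R` is positive, hence `μ > 0` and every `R_i` is positive.
Positivity of the `R` of the remaining coordinate `y` forces `z² - y² ≤ 2 N x z`: if `x` is small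
then `y` is close to `z`. The `R` of `z` is then `O(x z)`, while the `R` of `x` is at least
`2 (N - n) z² - O(x z)`. As these differ by a factor at most `2`, `x` cannot be small compared
to `z`; explicitly `z ≤ 2 N² x`. All ratios of coordinates of a solution are thus at most `2 N²`,
and the square with `L = 2 N² + 1`, `ε = 1 / L` has no solution on its boundary.
-/

noncomputable section

/-- The homotopy components `T_i(t, x1, x2, x3) = r_i / (1 + t·q_i)`. -/
def T1 (l m n t x1 x2 x3 : ℝ) : ℝ := r1 l m n x1 x2 x3 / (1 + t * q1 l m n x1 x2 x3)

def T2 (l m n t x1 x2 x3 : ℝ) : ℝ := r2 l m n x1 x2 x3 / (1 + t * q2 l m n x1 x2 x3)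

def T3 (l m n t x1 x2 x3 : ℝ) : ℝ := r3 l m n x1 x2 x3 / (1 + t * q3 l m n x1 x2 x3)

/-- The Ricci component of the coordinate `x`, with dimension coefficient `p`, multiplied by
`4 N x y z`. -/
def clearedRicci (N p x y z : ℝ) : ℝ := 2 * N * (y * z) + p * (x ^ 2 - y ^ 2 - z ^ 2)

/-- If `z` is the largest coordinate of a solution, every other coordinate `x` is comparable
to it. -/
lemma le_of_max {p q r μ a b c x y z : ℝ} (hp : 1 ≤ p) (hq : 1 ≤ q) (hr : 1 ≤ r)
    (ha : a ≤ 2) (hb : 1 ≤ b) (hc : 1 ≤ c)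
    (hx : 0 < x) (hy : 0 < y) (hz : 0 < z) (hxz : x ≤ z) (hyz : y ≤ z)
    (h1 : clearedRicci (p + q + r) p x y z = μ * a)
    (h2 : clearedRicci (p + q + r) q y x z = μ * b)
    (h3 : clearedRicci (p + q + r) r z x y = μ * c) :
    z ≤ 2 * (p + q + r) ^ 2 * x := by
  unfold clearedRicci at h1 h2 h3
  have hxy : 0 < x * y := mul_pos hx hy
  have hxz' : 0 < x * z := mul_pos hx hz
  -- The component of `z` is at least `r (z² - (x - y)²) > 0`.
  have hR3 : 0 < μ * c := by
    rw [← h3]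
    have e1 : 0 < r * ((z - x + y) * (z + x - y)) :=
      mul_pos (by linarith) (mul_pos (by linarith) (by linarith))
    have e2 : 0 < (p + q) * (x * y) := mul_pos (by linarith) hxy
    nlinarith
  have hμ : 0 < μ := by
    by_contra! h
    nlinarith
  have hR2 : 0 < μ * b := mul_pos hμ (by linarith)
  have hN : 0 < p + q + r := by linarith
  -- Positivity of the component of `y`.
  have hd : z ^ 2 - y ^ 2 ≤ 2 * (p + q + r) * (x * z) := by
    have e : 0 ≤ (q - 1) * (z ^ 2 - y ^ 2) :=
      mul_nonneg (by linarith) (by nlinarith)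
    have e' : 0 ≤ q * x ^ 2 := mul_nonneg (by linarith) (sq_nonneg x)
    nlinarith
  have hR3' : μ * c ≤ 2 * (p + q + r) * (1 + r) * (x * z) := by
    rw [← h3]
    have e1 := mul_le_mul_of_nonneg_left hd (by linarith : (0 : ℝ) ≤ r)
    have e2 : (p + q + r) * (x * y) ≤ (p + q + r) * (x * z) := by gcongr
    have e3 : 0 ≤ r * x ^ 2 := mul_nonneg (by linarith) (sq_nonneg x)
    nlinarith
  have hR1 : μ * a ≤ 2 * (μ * c) := by nlinarith
  have hR1' : 2 * (q + r) * z ^ 2 - 4 * (p + q + r) ^ 2 * (x * z) ≤ μ * a := by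
    rw [← h1]
    have e1 : z ^ 2 - 2 * (p + q + r) * (x * z) ≤ y * z := by nlinarith
    have e2 := mul_le_mul_of_nonneg_left e1 hN.le
    have e3 : p * (y ^ 2) ≤ p * z ^ 2 := by gcongr
    have e4 : 0 ≤ p * x ^ 2 := mul_nonneg (by linarith) (sq_nonneg x)
    nlinarith
  have hfin : z * z ≤ (2 * (p + q + r) ^ 2 * x) * z := by
    have e1 : (p + q + r) * (1 + r) * (x * z) ≤ (p + q + r) * (p + q + r) * (x * z) := by
      gcongr
      linarith
    have e2 : 2 * z ^ 2 ≤ (q + r) * z ^ 2 := by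
      gcongr
      linarith
    nlinarith
  exact le_of_mul_le_mul_right hfin hz

/-- The ratio of any two coordinates of a solution is bounded. -/
lemma le_of_solution {p q r μ a b c x y z : ℝ} (hp : 1 ≤ p) (hq : 1 ≤ q) (hr : 1 ≤ r)
    (ha : a ≤ 2) (hb : 1 ≤ b) (hc : 1 ≤ c)
    (hx : 0 < x) (hy : 0 < y) (hz : 0 < z)
    (h1 : clearedRicci (p + q + r) p x y z = μ * a)
    (h2 : clearedRicci (p + q + r) q y x z = μ * b)
    (h3 : clearedRicci (p + q + r) r z x y = μ * c) :
    z ≤ 2 * (p + q + r) ^ 2 * x := by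
  have hN : 1 ≤ 2 * (p + q + r) ^ 2 := by nlinarith
  rcases le_total z x with hzx | hxz
  · nlinarith
  rcases le_total y z with hyz | hzy
  · exact le_of_max hp hq hr ha hb hc hx hy hz hxz hyz h1 h2 h3
  -- Here `y` is the largest coordinate, so the roles of `y` and `z` are exchanged.
  · have hs : p + q + r = p + r + q := by ring
    have := le_of_max (y := z) (z := y) (μ := μ) hp hr hq ha hc hb hx hz hy
      (hxz.trans hzy) hzy
      (by rw [← h1]; unfold clearedRicci; ring)
      (by rw [← h3]; unfold clearedRicci; ring)
      (by rw [← h2]; unfold clearedRicci; ring)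
    rw [hs]
    linarith

/-- The common form of the three `1 + t q_i`, whose values lie in `[1, 2]`. -/
lemma one_add_mem {p q t u v w : ℝ} (hp : 1 ≤ p) (hq : 1 ≤ q) (ht : 0 ≤ t) (ht' : t ≤ 1)
    (hv : 0 ≤ v) (hu : 0 ≤ u) (hw : 0 < w) (huv : u + v ≤ w) :
    1 ≤ 1 + t * ((u + v) / (p * q * w)) ∧ 1 + t * ((u + v) / (p * q * w)) ≤ 2 := by
  have hpq : 1 ≤ p * q := by nlinarith
  have h0 : 0 ≤ (u + v) / (p * q * w) := by positivity
  have h1 : (u + v) / (p * q * w) ≤ 1 := by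
    rw [div_le_one (by positivity)]
    nlinarith
  constructor <;> nlinarith

/-- For all positive integers ℓ, m, n there is a square `[ε,L]²` on whose boundary, for every
`t ∈ [0,1]`, the simultaneous equality `T1 = T2 = T3` never holds. -/
theorem no_einstein_on_boundary (l m n : ℕ) (hl : 0 < l) (hm : 0 < m) (hn : 0 < n) :
    ∃ ε L : ℝ, 0 < ε ∧ ε < L ∧
      ∀ t : ℝ, 0 ≤ t → t ≤ 1 → ∀ x1 x2 : ℝ,
        (((x1 = ε ∨ x1 = L) ∧ ε ≤ x2 ∧ x2 ≤ L) ∨ ((x2 = ε ∨ x2 = L) ∧ ε ≤ x1 ∧ x1 ≤ L)) →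
        ¬ (T1 (l : ℝ) (m : ℝ) (n : ℝ) t x1 x2 1 = T2 (l : ℝ) (m : ℝ) (n : ℝ) t x1 x2 1 ∧
           T2 (l : ℝ) (m : ℝ) (n : ℝ) t x1 x2 1 = T3 (l : ℝ) (m : ℝ) (n : ℝ) t x1 x2 1) := by
  have hl' : (1 : ℝ) ≤ l := by exact_mod_cast hl
  have hm' : (1 : ℝ) ≤ m := by exact_mod_cast hm
  have hn' : (1 : ℝ) ≤ n := by exact_mod_cast hn
  generalize (l : ℝ) = l at *
  generalize (m : ℝ) = m at *
  generalize (n : ℝ) = n at *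
  obtain ⟨C, hC⟩ : ∃ C : ℝ, C = 2 * (n + m + l) ^ 2 := ⟨_, rfl⟩
  have hC1 : 1 ≤ C := by rw [hC]; nlinarith
  have hL : 0 < C + 1 := by linarith
  have hεL : (C + 1)⁻¹ < C + 1 := (inv_lt_one_of_one_lt₀ (by linarith)).trans (by linarith)
  have hε : 0 < (C + 1)⁻¹ := inv_pos.mpr hL
  refine ⟨(C + 1)⁻¹, C + 1, hε, hεL, ?_⟩
  rintro t ht ht' x1 x2 hbd ⟨h12, h23⟩
  have hx1 : 0 < x1 := by
    rcases hbd with ⟨h | h, -, -⟩ | ⟨-, h, -⟩ <;> linarith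
  have hx2 : 0 < x2 := by
    rcases hbd with ⟨-, h, -⟩ | ⟨h | h, -, -⟩ <;> linarith
  have hl0 : 0 < l := by linarith
  have hm0 : 0 < m := by linarith
  have hn0 : 0 < n := by linarith
  have hS : 0 < n * x1 ^ 2 + m * x2 ^ 2 + l * 1 ^ 2 := by positivity
  have u1 : 0 ≤ n * x1 ^ 2 := by positivity
  have u2 : 0 ≤ m * x2 ^ 2 := by positivity
  have u3 : 0 ≤ l * (1 : ℝ) ^ 2 := by positivity
  obtain ⟨a1, a2⟩ : 1 ≤ 1 + t * q1 l m n x1 x2 1 ∧ 1 + t * q1 l m n x1 x2 1 ≤ 2 :=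
    one_add_mem hl' hm' ht ht' u3 u2 hS (by linarith)
  obtain ⟨b1, b2⟩ : 1 ≤ 1 + t * q2 l m n x1 x2 1 ∧ 1 + t * q2 l m n x1 x2 1 ≤ 2 :=
    one_add_mem hl' hn' ht ht' u3 u1 hS (by linarith)
  obtain ⟨c1, c2⟩ : 1 ≤ 1 + t * q3 l m n x1 x2 1 ∧ 1 + t * q3 l m n x1 x2 1 ≤ 2 :=
    one_add_mem hm' hn' ht ht' u2 u1 hS (by linarith)
  unfold T1 T2 at h12
  unfold T2 T3 at h23
  generalize 1 + t * q1 l m n x1 x2 1 = a at *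
  generalize 1 + t * q2 l m n x1 x2 1 = b at *
  generalize 1 + t * q3 l m n x1 x2 1 = c at *
  obtain ⟨ν, hν⟩ : ∃ ν, ν = r2 l m n x1 x2 1 / b := ⟨_, rfl⟩
  have e1 : r1 l m n x1 x2 1 = ν * a := by
    rw [hν, ← h12]; field_simp
  have e2 : r2 l m n x1 x2 1 = ν * b := by
    rw [hν]; field_simp
  have e3 : r3 l m n x1 x2 1 = ν * c := by
    rw [hν, h23]; field_simp
  obtain ⟨μ, hμ⟩ : ∃ μ, μ = 4 * (n + m + l) * x1 * x2 * ν := ⟨_, rfl⟩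
  have hN : l + m + n ≠ 0 := by positivity
  have R1 : clearedRicci (n + m + l) n x1 x2 1 = μ * a := by
    rw [hμ, mul_assoc, ← e1]; unfold clearedRicci r1; field_simp; ring
  have R2 : clearedRicci (n + m + l) m x2 x1 1 = μ * b := by
    rw [hμ, mul_assoc, ← e2]; unfold clearedRicci r2; field_simp; ring
  have R3 : clearedRicci (n + m + l) l 1 x1 x2 = μ * c := by
    rw [hμ, mul_assoc, ← e3]; unfold clearedRicci r3; field_simp; ring
  have k1 : 1 ≤ C * x1 := by
    rw [hC]
    exact le_of_solution hn' hm' hl' a2 b1 c1 hx1 hx2 one_pos R1 R2 R3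
  have k2 : 1 ≤ C * x2 := by
    have := le_of_solution (μ := μ) hm' hn' hl' b2 a1 c1 hx2 hx1 one_pos
      (by rw [← R2]; unfold clearedRicci; ring)
      (by rw [← R1]; unfold clearedRicci; ring)
      (by rw [← R3]; unfold clearedRicci; ring)
    rw [hC]
    linarith
  have k3 : x1 ≤ C := by
    have := le_of_solution (μ := μ) hl' hm' hn' c2 b1 a1 one_pos hx2 hx1
      (by rw [← R3]; unfold clearedRicci; ring)
      (by rw [← R2]; unfold clearedRicci; ring)
      (by rw [← R1]; unfold clearedRicci; ring)
    rw [hC]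
    linarith
  have k4 : x2 ≤ C := by
    have := le_of_solution (μ := μ) hl' hn' hm' c2 a1 b1 one_pos hx1 hx2
      (by rw [← R3]; unfold clearedRicci; ring)
      (by rw [← R1]; unfold clearedRicci; ring)
      (by rw [← R2]; unfold clearedRicci; ring)
    rw [hC]
    linarith
  have hε1 : (C + 1) * (C + 1)⁻¹ = 1 := mul_inv_cancel₀ hL.ne'
  rcases hbd with ⟨h | h, -, -⟩ | ⟨h | h, -, -⟩
  · rw [← h] at hε1; linarith
  · linarith
  · rw [← h] at hε1; linarith
  · linarith
end
end

section
/- The following structure-constant identities hold, where sums run over all ordered pairs (e,f) of (not necessarily distinct) members of the indicated family: (i) the sum over e ∈ 𝒟1, f ∈ 𝒟2, g ∈ 𝒟3 of B([e,f],g)² equals ℓmn/N; (ii) Σ_{e,f ∈ 𝒟1} B([e,f],Z̃4)² = 0; (iii) Σ_{e,f ∈ 𝒟2} B([e,f],Z̃4)² = ℓ/(ℓ+m); (iv) Σ_{e,f ∈ 𝒟3} B([e,f],Z̃4)² = m/(ℓ+m); (v) Σ_{e,f ∈ 𝒟1} B([e,f],Z̃5)² = (ℓ+m)/N; (vi) Σ_{e,f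 ∈ 𝒟2} B([e,f],Z̃5)² = mn/(N(ℓ+m)); (vii) Σ_{e,f ∈ 𝒟3} B([e,f],Z̃5)² = ℓn/(N(ℓ+m)). (These are the nonzero B-structure constants of the C-space M_{ℓ,m,n} = SU(N)/(SU(ℓ)×SU(m)×SU(n)).) -/
/-! Every member of `𝒟1`, `𝒟2`, `𝒟3` has the form `w E_ij - w̄ E_ji`, where `w` is `1/(2√N)` or
`√(-1)/(2√N)` (`Dmem_eq`), so all traces reduce to `E_ab E_cd = δ_bc E_ad`.

For a diagonal matrix with entries `√(-1) x_a`, the number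
`B([e, f], Z)` with `e`, `f` in one family vanishes unless `e`, `f` are the two vectors
`Ã_ij`, `B̃_ij` with the same indices, and then it equals `±(x_i - x_j)`
(`Bform_bracket_diagonal_sq`). Since `x` is constant on each index block, a family on blocks `I`, `J`
contributes `2 |I| |J| (x_I - x_J)²` (`sum_bracket_diagonal`), which gives the six identities
involving `Z̃4` and `Z̃5`.

For the triple sum, only triples of vectors on the pairs `(i, j)`, `(k, j)`, `(k, i)` contribute;
for each `(i, j, k)` the kinds of the first two vectors determine the kind of the third,
and the square of the structure constant is `1/(4N)` (`Bform_bracket_Dmem_sq`). Hence the sum is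
`4 ℓ m n / (4N)` (`sum_bracket_Dmem`). -/

open Matrix

noncomputable section

/-- `B(X,Y) = −2N·Re(tr(XY))`, the negative of the Killing form of `su(N)`. -/
def Bform (N : ℕ) (X Y : Matrix (Fin N) (Fin N) ℂ) : ℝ :=
  -(2 * (N : ℝ)) * ((X * Y).trace).re

/-- The elementary matrix `E_ij` (natural-number indices; zero if out of range). -/
def Eij (N i j : ℕ) : Matrix (Fin N) (Fin N) ℂ :=
  Matrix.of fun a b => if (a : ℕ) = i ∧ (b : ℕ) = j then 1 else 0

/-- `A_ij = E_ij − E_ji`. -/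
def Amat (N i j : ℕ) : Matrix (Fin N) (Fin N) ℂ := Eij N i j - Eij N j i

/-- `B_ij = √(−1)·(E_ij + E_ji)`. -/
def Bmat (N i j : ℕ) : Matrix (Fin N) (Fin N) ℂ := Complex.I • (Eij N i j + Eij N j i)

/-- `Ã_ij = A_ij/(2√N)`. -/
def tA (N i j : ℕ) : Matrix (Fin N) (Fin N) ℂ :=
  (((2 * Real.sqrt N : ℝ) : ℂ))⁻¹ • Amat N i j

/-- `B̃_ij = B_ij/(2√N)`. -/
def tB (N i j : ℕ) : Matrix (Fin N) (Fin N) ℂ :=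
  (((2 * Real.sqrt N : ℝ) : ℂ))⁻¹ • Bmat N i j

/-- The member of a family `𝒟k` labelled by a pair of indices and a Boolean choosing
between `Ã_ij` (`true`) and `B̃_ij` (`false`). -/
def Dmem (N : ℕ) (p : ℕ × ℕ × Bool) : Matrix (Fin N) (Fin N) ℂ :=
  if p.2.2 then tA N p.1 p.2.1 else tB N p.1 p.2.1

/-- Index set of the family `𝒟1` (zero-based indices: `ℓ ≤ i < ℓ+m`, `0 ≤ j < ℓ`). -/
def idx1 (l m n : ℕ) : Finset (ℕ × ℕ × Bool) :=
  (Finset.Ico l (l + m)) ×ˢ (Finset.range l) ×ˢ (Finset.univ : Finset Bool)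

/-- Index set of the family `𝒟2` (`ℓ+m ≤ i < N`, `0 ≤ j < ℓ`). -/
def idx2 (l m n : ℕ) : Finset (ℕ × ℕ × Bool) :=
  (Finset.Ico (l + m) (l + m + n)) ×ˢ (Finset.range l) ×ˢ (Finset.univ : Finset Bool)

/-- Index set of the family `𝒟3` (`ℓ+m ≤ i < N`, `ℓ ≤ j < ℓ+m`). -/
def idx3 (l m n : ℕ) : Finset (ℕ × ℕ × Bool) :=
  (Finset.Ico (l + m) (l + m + n)) ×ˢ (Finset.Ico l (l + m)) ×ˢ (Finset.univ : Finset Bool)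

/-- `Z4 = √(−1)·diag((1/(ℓ+m))I_{ℓ+m}, −(1/n)I_n)`. -/
def Z4mat (l m n : ℕ) : Matrix (Fin (l + m + n)) (Fin (l + m + n)) ℂ :=
  Matrix.of fun a b => if a = b then
    (if (a : ℕ) < l + m then Complex.I / ((l + m : ℕ) : ℂ) else -Complex.I / (n : ℂ)) else 0

/-- `Z5 = √(−1)·diag((1/ℓ)I_ℓ, −(1/m)I_m, 0·I_n)`. -/
def Z5mat (l m n : ℕ) : Matrix (Fin (l + m + n)) (Fin (l + m + n)) ℂ :=
  Matrix.of fun a b => if a = b then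
    (if (a : ℕ) < l then Complex.I / (l : ℂ)
      else if (a : ℕ) < l + m then -Complex.I / (m : ℂ) else 0) else 0

/-- `c4 = √((ℓ+m)n)/(√2·N)`. -/
def c4 (l m n : ℕ) : ℝ :=
  Real.sqrt (((l : ℝ) + m) * n) / (Real.sqrt 2 * ((l : ℝ) + m + n))

/-- `c5 = √(ℓm)/(√(2N)·√(ℓ+m))`. -/
def c5 (l m n : ℕ) : ℝ :=
  Real.sqrt ((l : ℝ) * m) / (Real.sqrt (2 * ((l : ℝ) + m + n)) * Real.sqrt ((l : ℝ) + m))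

/-- `Z̃4 = c4·Z4`. -/
def tZ4 (l m n : ℕ) : Matrix (Fin (l + m + n)) (Fin (l + m + n)) ℂ :=
  ((c4 l m n : ℝ) : ℂ) • Z4mat l m n

/-- `Z̃5 = c5·Z5`. -/
def tZ5 (l m n : ℕ) : Matrix (Fin (l + m + n)) (Fin (l + m + n)) ℂ :=
  ((c5 l m n : ℝ) : ℂ) • Z5mat l m n

/-! ### Elementary matrices -/

lemma Eij_mul {N a b c d : ℕ} (hb : b < N) :
    Eij N a b * Eij N c d = if b = c then Eij N a d else 0 := by
  ext x y
  rw [Matrix.mul_apply, Finset.sum_eq_single (⟨b, hb⟩ : Fin N)]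
  · by_cases h : b = c <;> by_cases h1 : (x : ℕ) = a <;> by_cases h2 : (y : ℕ) = d <;>
      simp [Eij, h, h1, h2]
  · intro k _ hk
    have : (k : ℕ) ≠ b := fun h => hk (Fin.ext h)
    simp [Eij, this]
  · simp

lemma trace_Eij_mul_diagonal {N a b : ℕ} (ha : a < N) (z : ℕ → ℂ) :
    (Eij N a b * Matrix.diagonal fun x : Fin N => z x).trace = if a = b then z a else 0 := by
  rw [Matrix.trace, Finset.sum_eq_single (⟨a, ha⟩ : Fin N)]
  · by_cases h : a = b <;> simp [Eij, h]
  · intro k _ hk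
    have : (k : ℕ) ≠ a := fun h => hk (Fin.ext h)
    simp [Eij, this]
  · simp

lemma trace_Eij {N a b : ℕ} (ha : a < N) : (Eij N a b).trace = if a = b then 1 else 0 := by
  simpa using trace_Eij_mul_diagonal (b := b) ha fun _ => 1

/-- The coefficient of `E_ij` in `Ã_ij` (`true`) and in `B̃_ij` (`false`). -/
def coef (N : ℕ) (s : Bool) : ℂ :=
  (((2 * Real.sqrt N : ℝ) : ℂ))⁻¹ * if s then 1 else Complex.I

/-- Both kinds of basis vectors have the skew-Hermitian shape `w E_ij - w̄ E_ji`. -/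
lemma Dmem_eq (N i j : ℕ) (s : Bool) :
    Dmem N (i, j, s) = coef N s • Eij N i j - star (coef N s) • Eij N j i := by
  cases s
  · simp [Dmem, tB, Bmat, coef, smul_smul]
  · simp [Dmem, tA, Amat, coef, smul_sub]

/-! ### Values of the form on brackets -/

/-- The hypotheses `i ≠ j'`, `j ≠ i'` hold when both vectors lie in one family, whose row and column
blocks are disjoint; only the products `E_ij E_ji` and `E_ji E_ij` then survive. -/
lemma trace_bracket_diagonal {N i j i' j' : ℕ} (hi : i < N) (hj : j < N) (hi' : i' < N)
    (hj' : j' < N) (hij' : i ≠ j') (hji' : j ≠ i') (s t : Bool) (z : ℕ → ℂ) :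
    (⁅Dmem N (i, j, s), Dmem N (i', j', t)⁆ * Matrix.diagonal fun x : Fin N => z x).trace =
      if i = i' ∧ j = j' then
        (star (coef N s) * coef N t - coef N s * star (coef N t)) * (z i - z j) else 0 := by
  by_cases h1 : i = i' <;> by_cases h2 : j = j'
  · subst h1 h2
    simp [Ring.lie_def, Dmem_eq, sub_mul, mul_sub, Eij_mul, hi, hj, hij', hji',
      trace_Eij_mul_diagonal]
    ring
  · subst h1
    simp [Ring.lie_def, Dmem_eq, sub_mul, mul_sub, add_mul, Eij_mul, hi, hj, hj', hij', hji',
      hij'.symm, hji'.symm, trace_Eij_mul_diagonal, h2, Ne.symm h2]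
  · subst h2
    simp [Ring.lie_def, Dmem_eq, sub_mul, mul_sub, add_mul, Eij_mul, hi, hj, hi', hij', hji',
      hij'.symm, hji'.symm, trace_Eij_mul_diagonal, h1, Ne.symm h1]
  · simp [Ring.lie_def, Dmem_eq, sub_mul, mul_sub, Eij_mul, hi, hj, hi', hj', hij', hji',
      hij'.symm, hji'.symm, h1, h2, Ne.symm h1, Ne.symm h2]

/-- `𝒟1` and `𝒟2` bracket into the span of `𝒟3`: vectors on `(i, j)` and `(k, j)` give a
skew-Hermitian combination of `E_ki` and `E_ik`. -/
lemma bracket_Dmem {N i j k j' : ℕ} (hi : i < N) (hj : j < N) (hk : k < N)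
    (hj' : j' < N) (hij' : i ≠ j') (hik : i ≠ k) (hjk : j ≠ k) (s t : Bool) :
    ⁅Dmem N (i, j, s), Dmem N (k, j', t)⁆ =
      if j = j' then (star (coef N s) * coef N t) • Eij N k i
        - (coef N s * star (coef N t)) • Eij N i k else 0 := by
  by_cases h : j = j'
  · subst h
    simp [Ring.lie_def, Dmem_eq, sub_mul, mul_sub, Eij_mul, hi, hj, hk, hij', hik, hjk,
      hij'.symm, hik.symm, hjk.symm, smul_smul]
    module
  · simp [Ring.lie_def, Dmem_eq, sub_mul, mul_sub, Eij_mul, hi, hj, hk, hj', hij', hik, hjk,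
      hij'.symm, hik.symm, hjk.symm, h, Ne.symm h]

lemma trace_bracket_Dmem {N i j k j' k' i' : ℕ} (hi : i < N) (hj : j < N) (hk : k < N)
    (hj' : j' < N) (hij' : i ≠ j') (hik : i ≠ k) (hik' : i ≠ k') (hjk : j ≠ k)
    (hki' : k ≠ i') (s t u : Bool) :
    (⁅Dmem N (i, j, s), Dmem N (k, j', t)⁆ * Dmem N (k', i', u)).trace =
      if j = j' ∧ k = k' ∧ i = i' then
        -(coef N s * star (coef N t) * coef N u
          + star (coef N s) * coef N t * star (coef N u)) else 0 := by
  rw [bracket_Dmem hi hj hk hj' hij' hik hjk]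
  by_cases h1 : j = j'
  · by_cases h2 : k = k'
    · subst h2
      by_cases h3 : i = i'
      · subst h3
        simp [Dmem_eq, sub_mul, mul_sub, Eij_mul, trace_Eij, hi, hk, hik, hik.symm, h1]
        ring
      · simp [Dmem_eq, sub_mul, mul_sub, Eij_mul, trace_Eij, hi, hk, hik, hki', h1, h3]
    · by_cases h3 : i = i'
      · subst h3
        simp [Dmem_eq, sub_mul, mul_sub, Eij_mul, trace_Eij, hi, hk, hik', hki', h1, h2]
      · simp [Dmem_eq, sub_mul, mul_sub, Eij_mul, hi, hk, hik', hki', h1, h2, h3]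
  · simp [h1]

lemma two_sqrt_inv_sq (N : ℕ) : ((2 * Real.sqrt N)⁻¹) ^ 2 = 1 / (4 * (N : ℝ)) := by
  rw [inv_pow, mul_pow, Real.sq_sqrt (Nat.cast_nonneg N)]; norm_num

lemma Bform_bracket_diagonal_sq {N i j i' j' : ℕ} (hi : i < N) (hj : j < N) (hi' : i' < N)
    (hj' : j' < N) (hij' : i ≠ j') (hji' : j ≠ i') (s t : Bool) (x : ℕ → ℝ) :
    (Bform N ⁅Dmem N (i, j, s), Dmem N (i', j', t)⁆
        (Matrix.diagonal fun a : Fin N => Complex.I * (x a : ℂ))) ^ 2 =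
      if i' = i ∧ j' = j ∧ t = !s then (x i - x j) ^ 2 else 0 := by
  have hN : (0 : ℝ) < N := by exact_mod_cast (Nat.zero_le i).trans_lt hi
  have hw := two_sqrt_inv_sq N
  rw [Bform, trace_bracket_diagonal hi hj hi' hj' hij' hji' s t fun a => Complex.I * (x a : ℂ)]
  by_cases h : i = i' ∧ j = j'
  · obtain ⟨rfl, rfl⟩ := h
    set r : ℝ := (2 * Real.sqrt N)⁻¹ with hr
    have hc : ∀ s, coef N s = (r : ℂ) * if s then 1 else Complex.I := by
      intro s; simp [coef, hr]
    have key : (2 * (N : ℝ) * (2 * r ^ 2 * (x i - x j))) ^ 2 = (x i - x j) ^ 2 := by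
      rw [hw]; field_simp; norm_num
    cases s <;> cases t <;> simp [hc]
    · rw [← key]; ring
    · rw [← key]; ring
  · have h' : ¬ (i' = i ∧ j' = j ∧ t = !s) := fun h' => h ⟨h'.1.symm, h'.2.1.symm⟩
    simp [h, h']

/-- The sign of the number squared here depends on the kinds `s`, `t`, `u`. When the indices match, it is nonzero exactly
when the number of vectors `B̃` among the three is even, that is, `u = (s == t)`. -/
lemma Bform_bracket_Dmem_sq {N i j k j' k' i' : ℕ} (hi : i < N) (hj : j < N) (hk : k < N)
    (hj' : j' < N) (hij' : i ≠ j') (hik : i ≠ k) (hik' : i ≠ k') (hjk : j ≠ k)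
    (hki' : k ≠ i') (s t u : Bool) :
    (Bform N ⁅Dmem N (i, j, s), Dmem N (k, j', t)⁆ (Dmem N (k', i', u))) ^ 2 =
      if j' = j ∧ k' = k ∧ i' = i ∧ u = (s == t) then 1 / (4 * (N : ℝ)) else 0 := by
  have hN : (0 : ℝ) < N := by exact_mod_cast (Nat.zero_le i).trans_lt hi
  have hw := two_sqrt_inv_sq N
  rw [Bform, trace_bracket_Dmem hi hj hk hj' hij' hik hik' hjk hki']
  by_cases h : j = j' ∧ k = k' ∧ i = i'
  · obtain ⟨rfl, rfl, rfl⟩ := h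
    set r : ℝ := (2 * Real.sqrt N)⁻¹ with hr
    have hc : ∀ s, coef N s = (r : ℂ) * if s then 1 else Complex.I := by
      intro s; simp [coef, hr]
    have key : (2 * (N : ℝ)) ^ 2 * (4 * (r ^ 2) ^ 3) = (N : ℝ)⁻¹ * 4⁻¹ := by
      rw [hw]; field_simp; norm_num
    cases s <;> cases t <;> cases u <;> simp [hc]
    all_goals (rw [← key]; ring)
  · have h' : ¬ (j' = j ∧ k' = k ∧ i' = i ∧ u = (s == t)) :=
      fun h' => h ⟨h'.1.symm, h'.2.1.symm, h'.2.2.1.symm⟩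
    simp [h, h']

/-! ### Summation over the families -/

/-- If `x` takes the constant value `a` on `I` and `b` on `J`, each element of the family indexed
by `I × J` pairs nontrivially only with its partner of the other kind. -/
lemma sum_bracket_diagonal {N : ℕ} (I J : Finset ℕ) (hI : ∀ i ∈ I, i < N) (hJ : ∀ j ∈ J, j < N)
    (hIJ : ∀ i ∈ I, ∀ j ∈ J, i ≠ j) (x : ℕ → ℝ) (a b : ℝ) (ha : ∀ i ∈ I, x i = a)
    (hb : ∀ j ∈ J, x j = b) :
    ∑ p ∈ I ×ˢ J ×ˢ (Finset.univ : Finset Bool), ∑ q ∈ I ×ˢ J ×ˢ (Finset.univ : Finset Bool),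
      (Bform N ⁅Dmem N p, Dmem N q⁆
        (Matrix.diagonal fun c : Fin N => Complex.I * (x c : ℂ))) ^ 2 =
      2 * I.card * J.card * (a - b) ^ 2 := by
  have h : ∀ p ∈ I ×ˢ J ×ˢ (Finset.univ : Finset Bool),
      ∑ q ∈ I ×ˢ J ×ˢ (Finset.univ : Finset Bool), (Bform N ⁅Dmem N p, Dmem N q⁆
        (Matrix.diagonal fun c : Fin N => Complex.I * (x c : ℂ))) ^ 2 = (a - b) ^ 2 := by
    rintro ⟨i, j, s⟩ hp
    simp only [Finset.mem_product, Finset.mem_univ, and_true] at hp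
    obtain ⟨hi, hj⟩ := hp
    rw [Finset.sum_eq_single (i, j, !s)]
    · rw [Bform_bracket_diagonal_sq (hI i hi) (hJ j hj) (hI i hi) (hJ j hj) (hIJ i hi j hj)
        (hIJ i hi j hj).symm, ha i hi, hb j hj]
      simp
    · rintro ⟨i', j', t⟩ hq hne
      simp only [Finset.mem_product, Finset.mem_univ, and_true] at hq
      rw [Bform_bracket_diagonal_sq (hI i hi) (hJ j hj) (hI i' hq.1) (hJ j' hq.2)
        (hIJ i hi j' hq.2) (hIJ i' hq.1 j hj).symm, if_neg]
      rintro ⟨rfl, rfl, rfl⟩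
      exact hne rfl
    · intro hn
      exact absurd (by simp [hi, hj]) hn
  rw [Finset.sum_congr rfl h]
  simp only [Finset.sum_const, Finset.card_product, Finset.card_univ, Fintype.card_bool,
    nsmul_eq_mul]
  push_cast
  ring

/-- For pairwise disjoint index blocks `J`, `I`, `K`, the families indexed by `I × J` and `K × J`
bracket into the one indexed by `K × I`. Every `(i, j, k)` together with the kinds of the first two
vectors gives exactly one nonzero term. -/
lemma sum_bracket_Dmem {N : ℕ} (I J K : Finset ℕ) (hI : ∀ i ∈ I, i < N) (hJ : ∀ j ∈ J, j < N)
    (hK : ∀ k ∈ K, k < N) (hIJ : ∀ i ∈ I, ∀ j ∈ J, i ≠ j) (hIK : ∀ i ∈ I, ∀ k ∈ K, i ≠ k)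
    (hJK : ∀ j ∈ J, ∀ k ∈ K, j ≠ k) :
    ∑ p ∈ I ×ˢ J ×ˢ (Finset.univ : Finset Bool), ∑ q ∈ K ×ˢ J ×ˢ (Finset.univ : Finset Bool),
      ∑ r ∈ K ×ˢ I ×ˢ (Finset.univ : Finset Bool),
      (Bform N ⁅Dmem N p, Dmem N q⁆ (Dmem N r)) ^ 2 =
      I.card * J.card * K.card / (N : ℝ) := by
  have h : ∀ p ∈ I ×ˢ J ×ˢ (Finset.univ : Finset Bool),
      ∀ q ∈ K ×ˢ J ×ˢ (Finset.univ : Finset Bool),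
      ∑ r ∈ K ×ˢ I ×ˢ (Finset.univ : Finset Bool),
      (Bform N ⁅Dmem N p, Dmem N q⁆ (Dmem N r)) ^ 2 =
        if q.2.1 = p.2.1 then 1 / (4 * (N : ℝ)) else 0 := by
    rintro ⟨i, j, s⟩ hp ⟨k, j', t⟩ hq
    simp only [Finset.mem_product, Finset.mem_univ, and_true] at hp hq
    obtain ⟨hi, hj⟩ := hp
    obtain ⟨hk, hj'⟩ := hq
    have val : ∀ k' ∈ K, ∀ i' ∈ I, ∀ u,
        (Bform N ⁅Dmem N (i, j, s), Dmem N (k, j', t)⁆ (Dmem N (k', i', u))) ^ 2 =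
        if j' = j ∧ k' = k ∧ i' = i ∧ u = (s == t) then 1 / (4 * (N : ℝ)) else 0 :=
      fun k' hk' i' hi' u =>
      Bform_bracket_Dmem_sq (hI i hi) (hJ j hj) (hK k hk) (hJ j' hj')
        (hIJ i hi j' hj') (hIK i hi k hk) (hIK i hi k' hk') (hJK j hj k hk)
        (hIK i' hi' k hk).symm s t u
    rw [Finset.sum_eq_single (k, i, s == t)]
    · rw [val k hk i hi]
      simp
    · rintro ⟨k', i', u⟩ hr hne
      simp only [Finset.mem_product, Finset.mem_univ, and_true] at hr
      rw [val k' hr.1 i' hr.2, if_neg]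
      rintro ⟨-, rfl, rfl, rfl⟩
      exact hne rfl
    · intro hn
      exact absurd (Finset.mem_product.2 ⟨hk, Finset.mem_product.2 ⟨hi, Finset.mem_univ _⟩⟩) hn
  have h2 : ∀ p ∈ I ×ˢ J ×ˢ (Finset.univ : Finset Bool),
      ∑ q ∈ K ×ˢ J ×ˢ (Finset.univ : Finset Bool),
      ∑ r ∈ K ×ˢ I ×ˢ (Finset.univ : Finset Bool),
      (Bform N ⁅Dmem N p, Dmem N q⁆ (Dmem N r)) ^ 2 = K.card * (2 * (1 / (4 * (N : ℝ)))) := by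
    intro p hp
    rw [Finset.sum_congr rfl (h p hp)]
    have hj : p.2.1 ∈ J := (Finset.mem_product.1 (Finset.mem_product.1 hp).2).1
    simp only [Finset.sum_product]
    simp [hj]
  rw [Finset.sum_congr rfl h2]
  simp only [Finset.sum_const, Finset.card_product, Finset.card_univ, Fintype.card_bool,
    nsmul_eq_mul]
  push_cast
  ring

/-! ### The elements `Z̃4` and `Z̃5` -/

lemma tZ4_eq (l m n : ℕ) : tZ4 l m n = Matrix.diagonal fun a : Fin (l + m + n) =>
    Complex.I * (((if (a : ℕ) < l + m then c4 l m n / (l + m) else -(c4 l m n / n) : ℝ)) : ℂ) := by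
  ext a b
  by_cases h : a = b
  · subst h
    simp only [tZ4, Z4mat, Matrix.smul_apply, Matrix.of_apply, Matrix.diagonal_apply_eq]
    split_ifs <;> push_cast <;> simp <;> ring
  · simp [tZ4, Z4mat, h]

lemma tZ5_eq (l m n : ℕ) : tZ5 l m n = Matrix.diagonal fun a : Fin (l + m + n) =>
    Complex.I * (((if (a : ℕ) < l then c5 l m n / l
      else if (a : ℕ) < l + m then -(c5 l m n / m) else 0 : ℝ)) : ℂ) := by
  ext a b
  by_cases h : a = b
  · subst h
    simp only [tZ5, Z5mat, Matrix.smul_apply, Matrix.of_apply, Matrix.diagonal_apply_eq]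
    split_ifs <;> push_cast <;> simp <;> ring
  · simp [tZ5, Z5mat, h]

lemma c4_sq (l m n : ℕ) :
    c4 l m n ^ 2 = ((l : ℝ) + m) * n / (2 * ((l : ℝ) + m + n) ^ 2) := by
  rw [c4, div_pow, mul_pow, Real.sq_sqrt (by positivity), Real.sq_sqrt (by positivity)]

lemma c5_sq (l m n : ℕ) :
    c5 l m n ^ 2 = (l : ℝ) * m / (2 * ((l : ℝ) + m + n) * ((l : ℝ) + m)) := by
  rw [c5, div_pow, mul_pow, Real.sq_sqrt (by positivity), Real.sq_sqrt (by positivity),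
    Real.sq_sqrt (by positivity)]

/-- The nonzero `B`-structure constants of the C-space
`M_{ℓ,m,n} = SU(N)/(SU(ℓ)×SU(m)×SU(n))`, `N = ℓ+m+n`. -/
theorem B_structure_constants (l m n : ℕ) (hl : 0 < l) (hm : 0 < m) (hn : 0 < n) :
    let N := l + m + n
    let LR : ℝ := l; let MR : ℝ := m; let NR : ℝ := n
    (∑ p ∈ idx1 l m n, ∑ q ∈ idx2 l m n, ∑ s ∈ idx3 l m n,
        (Bform N ⁅Dmem N p, Dmem N q⁆ (Dmem N s)) ^ 2 = LR * MR * NR / (LR + MR + NR)) ∧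
    (∑ p ∈ idx1 l m n, ∑ q ∈ idx1 l m n,
        (Bform N ⁅Dmem N p, Dmem N q⁆ (tZ4 l m n)) ^ 2 = 0) ∧
    (∑ p ∈ idx2 l m n, ∑ q ∈ idx2 l m n,
        (Bform N ⁅Dmem N p, Dmem N q⁆ (tZ4 l m n)) ^ 2 = LR / (LR + MR)) ∧
    (∑ p ∈ idx3 l m n, ∑ q ∈ idx3 l m n,
        (Bform N ⁅Dmem N p, Dmem N q⁆ (tZ4 l m n)) ^ 2 = MR / (LR + MR)) ∧
    (∑ p ∈ idx1 l m n, ∑ q ∈ idx1 l m n,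
        (Bform N ⁅Dmem N p, Dmem N q⁆ (tZ5 l m n)) ^ 2 = (LR + MR) / (LR + MR + NR)) ∧
    (∑ p ∈ idx2 l m n, ∑ q ∈ idx2 l m n,
        (Bform N ⁅Dmem N p, Dmem N q⁆ (tZ5 l m n)) ^ 2 =
          MR * NR / ((LR + MR + NR) * (LR + MR))) ∧
    (∑ p ∈ idx3 l m n, ∑ q ∈ idx3 l m n,
        (Bform N ⁅Dmem N p, Dmem N q⁆ (tZ5 l m n)) ^ 2 =
          LR * NR / ((LR + MR + NR) * (LR + MR))) := by
  intro N LR MR NR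
  have hL : 0 < LR := Nat.cast_pos.2 hl
  have hM : 0 < MR := Nat.cast_pos.2 hm
  have hR : 0 < NR := Nat.cast_pos.2 hn
  have h4 := c4_sq l m n
  have h5 := c5_sq l m n
  have hX4 := fun I J hI hJ hIJ => sum_bracket_diagonal (N := l + m + n) I J hI hJ hIJ
    (fun a => if a < l + m then c4 l m n / (l + m) else -(c4 l m n / n))
  have hX5 := fun I J hI hJ hIJ => sum_bracket_diagonal (N := l + m + n) I J hI hJ hIJ
    (fun a => if a < l then c5 l m n / l else if a < l + m then -(c5 l m n / m) else 0)
  rw [tZ4_eq, tZ5_eq]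
  change _ = LR * MR * NR / (LR + MR + NR) ∧ _
  have cR : (Finset.range l).card = l := Finset.card_range l
  have cM : (Finset.Ico l (l + m)).card = m := by simp
  have cN : (Finset.Ico (l + m) (l + m + n)).card = n := by simp
  refine ⟨?_, ?_, ?_, ?_, ?_, ?_, ?_⟩
  · refine (sum_bracket_Dmem (N := l + m + n) _ _ _ ?_ ?_ ?_ ?_ ?_ ?_).trans ?_
    case refine_7 => rw [cR, cM, cN]; push_cast; ring
    all_goals simp only [Finset.mem_Ico, Finset.mem_range]; intros; omega
  · refine (hX4 _ _ ?_ ?_ ?_ (c4 l m n / (l + m)) (c4 l m n / (l + m)) ?_ ?_).trans ?_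
    case refine_6 => simp
    all_goals simp only [Finset.mem_Ico, Finset.mem_range]; intros
    case refine_4 | refine_5 => rw [if_pos (by omega)]
    all_goals omega
  · refine (hX4 _ _ ?_ ?_ ?_ (-(c4 l m n / n)) (c4 l m n / (l + m)) ?_ ?_).trans ?_
    case refine_6 =>
      rw [cR, cN, show (-(c4 l m n / n) - c4 l m n / (l + m)) ^ 2 =
        c4 l m n ^ 2 * (1 / NR + 1 / (LR + MR)) ^ 2 by ring, h4]
      change 2 * NR * LR * ((LR + MR) * NR / (2 * (LR + MR + NR) ^ 2) * _) = _
      field_simp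
    all_goals simp only [Finset.mem_Ico, Finset.mem_range]; intros
    case refine_4 => rw [if_neg (by omega)]
    case refine_5 => rw [if_pos (by omega)]
    all_goals omega
  · refine (hX4 _ _ ?_ ?_ ?_ (-(c4 l m n / n)) (c4 l m n / (l + m)) ?_ ?_).trans ?_
    case refine_6 =>
      rw [cM, cN, show (-(c4 l m n / n) - c4 l m n / (l + m)) ^ 2 =
        c4 l m n ^ 2 * (1 / NR + 1 / (LR + MR)) ^ 2 by ring, h4]
      change 2 * NR * MR * ((LR + MR) * NR / (2 * (LR + MR + NR) ^ 2) * _) = _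
      field_simp
    all_goals simp only [Finset.mem_Ico]; intros
    case refine_4 => rw [if_neg (by omega)]
    case refine_5 => rw [if_pos (by omega)]
    all_goals omega
  · refine (hX5 _ _ ?_ ?_ ?_ (-(c5 l m n / m)) (c5 l m n / l) ?_ ?_).trans ?_
    case refine_6 =>
      rw [cM, cR, show (-(c5 l m n / m) - c5 l m n / l) ^ 2 =
        c5 l m n ^ 2 * (1 / MR + 1 / LR) ^ 2 by ring, h5]
      change 2 * MR * LR * (LR * MR / (2 * (LR + MR + NR) * (LR + MR)) * _) = _
      field_simp
    all_goals simp only [Finset.mem_Ico, Finset.mem_range]; intros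
    case refine_4 => rw [if_neg (by omega), if_pos (by omega)]
    case refine_5 => rw [if_pos (by omega)]
    all_goals omega
  · refine (hX5 _ _ ?_ ?_ ?_ 0 (c5 l m n / l) ?_ ?_).trans ?_
    case refine_6 =>
      rw [cN, cR, show (0 - c5 l m n / l) ^ 2 = c5 l m n ^ 2 * (1 / LR) ^ 2 by ring, h5]
      change 2 * NR * LR * (LR * MR / (2 * (LR + MR + NR) * (LR + MR)) * _) = _
      field_simp
    all_goals simp only [Finset.mem_Ico, Finset.mem_range]; intros
    case refine_4 => rw [if_neg (by omega), if_neg (by omega)]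
    case refine_5 => rw [if_pos (by omega)]
    all_goals omega
  · refine (hX5 _ _ ?_ ?_ ?_ 0 (-(c5 l m n / m)) ?_ ?_).trans ?_
    case refine_6 =>
      rw [cN, cM, show (0 - -(c5 l m n / m)) ^ 2 = c5 l m n ^ 2 * (1 / MR) ^ 2 by ring, h5]
      change 2 * NR * MR * (LR * MR / (2 * (LR + MR + NR) * (LR + MR)) * _) = _
      field_simp
    all_goals simp only [Finset.mem_Ico]; intros
    case refine_4 => rw [if_neg (by omega), if_neg (by omega)]
    case refine_5 => rw [if_neg (by omega), if_pos (by omega)]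
    all_goals omega
end
end

section
/- For every real number c the following hold, where sums run over all ordered pairs (e,f) of members of the indicated family: (i) Σ_{e,f ∈ 𝒟1} (c·B([e,f],Z̃4) + B([e,f],Z̃5))² = (ℓ+m)/N; (ii) Σ_{e,f ∈ 𝒟2} (c·B([e,f],Z̃4) + B([e,f],Z̃5))² = c²ℓ/(ℓ+m) + mn/(N(ℓ+m)) + 2c·√(ℓmn)/((ℓ+m)√N); (iii) Σ_{e,f ∈ 𝒟3} (c·B([e,f],Z̃4) + B([e,f],Z̃5))² = c²m/(ℓ+m) + ℓn/(N(ℓ+m)) − 2c·√(ℓmn)/((ℓ+m)√N). (These are the structure constants of M_{ℓ,m,n} with respect to the invariant inner product parametrized by c.) -/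
/-! The trace form `(X, Y) ↦ tr([X, Y] D)` for a diagonal matrix `D` pairs `E_ij` only with
`E_ji`, with value `D_i - D_j` (`lieTrace_Eij`). If all first indices are at least `k` and all
second indices are below `k`, then the only pairs of members of a family `𝒟` whose bracket has a
nonzero diagonal part are `(Ã_ij, B̃_ij)` and `(B̃_ij, Ã_ij)`, whose bracket is
`±√(-1)/(2N) · (E_ii - E_jj)` on the diagonal. Hence `B([e, f], √(-1)·diag d) = ±(d_i - d_j)` for
these pairs and `0` for all others (`Bform_lie_Dmem`).

The combination `c·B([e,f], Z̃4) + B([e,f], Z̃5)` is the pairing with the single diagonal matrix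
`√(-1)·diag d`, `d = c·c4·z4 + c5·z5`. The difference `d_i - d_j` is constant on each family, so the
sum is `2 · #S · #T · (d_i - d_j)²` (`sum_family`), and each claim becomes an identity between
square roots, proved using the values of `c4²`, `c5²` and `c4·c5`. -/

open Matrix

noncomputable section

lemma Eij_eq_single {N i j : ℕ} (hi : i < N) (hj : j < N) :
    Eij N i j = Matrix.single ⟨i, hi⟩ ⟨j, hj⟩ 1 := by
  ext a b
  simp [Eij, Matrix.single_apply, Fin.ext_iff, eq_comm]

/-- The bilinear form `(X, Y) ↦ tr([X, Y] D)`. -/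
def lieTrace {N : ℕ} (D : Matrix (Fin N) (Fin N) ℂ) :
    Matrix (Fin N) (Fin N) ℂ →ₗ[ℂ] Matrix (Fin N) (Fin N) ℂ →ₗ[ℂ] ℂ :=
  LinearMap.mk₂ ℂ (fun X Y => (⁅X, Y⁆ * D).trace)
    (by intros; simp only [Ring.lie_def, Matrix.sub_mul, Matrix.add_mul, Matrix.mul_add,
          Matrix.trace_add, Matrix.trace_sub]; ring)
    (by intros; simp only [Ring.lie_def, Matrix.sub_mul, Matrix.smul_mul, Matrix.mul_smul,
          Matrix.trace_smul, Matrix.trace_sub, smul_sub])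
    (by intros; simp only [Ring.lie_def, Matrix.sub_mul, Matrix.add_mul, Matrix.mul_add,
          Matrix.trace_add, Matrix.trace_sub]; ring)
    (by intros; simp only [Ring.lie_def, Matrix.sub_mul, Matrix.smul_mul, Matrix.mul_smul,
          Matrix.trace_smul, Matrix.trace_sub, smul_sub])

lemma lieTrace_Eij {N i j : ℕ} (hi : i < N) (hj : j < N) (i' j' : ℕ) (D : ℕ → ℂ) :
    lieTrace (Matrix.diagonal fun a : Fin N => D a) (Eij N i j) (Eij N i' j') =
      if j = i' ∧ i = j' then D i - D j else 0 := by
  rw [lieTrace, LinearMap.mk₂_apply, Ring.lie_def, Matrix.sub_mul, Matrix.trace_sub,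
    Matrix.mul_assoc, Matrix.trace_mul_cycle (Eij N i' j'), Matrix.trace_mul_comm (_ * _)]
  rw [Eij_eq_single hi hj, Matrix.trace_single_mul, Matrix.trace_single_mul]
  rw [Matrix.mul_diagonal, Matrix.diagonal_mul]
  simp only [Eij, Matrix.of_apply]
  split_ifs <;> simp

/-- The pairing of brackets within a family whose first indices lie in `[k, N)` and whose second
indices lie in `[0, k)`. -/
lemma Bform_lie_Dmem {N k : ℕ} (hN : 0 < N) (d : ℕ → ℝ) {i j i' j' : ℕ} (s t : Bool)
    (hi : k ≤ i) (hiN : i < N) (hj : j < k) (hi' : k ≤ i') (hj' : j' < k) :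
    Bform N ⁅Dmem N (i, j, s), Dmem N (i', j', t)⁆
        (Matrix.diagonal fun a : Fin N => Complex.I * (d a : ℂ)) =
      if i = i' ∧ j = j' ∧ s ≠ t then (if s then d i - d j else -(d i - d j)) else 0 := by
  have hjN : j < N := by omega
  change -(2 * (N : ℝ)) * (lieTrace (Matrix.diagonal fun a : Fin N => Complex.I * (d a : ℂ))
    (Dmem N (i, j, s)) (Dmem N (i', j', t))).re = _
  have h1 := lieTrace_Eij hiN hjN i' j' (fun a => Complex.I * (d a : ℂ))
  have h2 := lieTrace_Eij hiN hjN j' i' (fun a => Complex.I * (d a : ℂ))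
  have h3 := lieTrace_Eij hjN hiN i' j' (fun a => Complex.I * (d a : ℂ))
  have h4 := lieTrace_Eij hjN hiN j' i' (fun a => Complex.I * (d a : ℂ))
  rw [if_neg (by omega)] at h1 h4
  -- The two factors `1/(2√N)` combine to `1/(4N)`.
  have hs : ((((2 * Real.sqrt N : ℝ) : ℂ))⁻¹ * (((2 * Real.sqrt N : ℝ) : ℂ))⁻¹) =
      (((4 * N : ℝ)⁻¹ : ℝ) : ℂ) := by
    rw [← Complex.ofReal_inv, ← Complex.ofReal_mul, ← mul_inv]
    congr 2
    nlinarith [Real.mul_self_sqrt (Nat.cast_nonneg (α := ℝ) N)]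
  have hN' : (N : ℝ) ≠ 0 := by positivity
  have scale : ∀ (z : ℂ) (r : ℝ),
      z = (((2 * Real.sqrt N : ℝ) : ℂ))⁻¹ * (((2 * Real.sqrt N : ℝ) : ℂ))⁻¹ * (r : ℂ) →
      -(2 * (N : ℝ)) * z.re = -r / 2 := by
    intro z r hz
    rw [hz, hs, ← Complex.ofReal_mul, Complex.ofReal_re]
    field_simp
    ring
  by_cases hij : i = i' ∧ j = j'
  · obtain ⟨rfl, rfl⟩ := hij
    simp only [and_self, if_true] at h2 h3
    cases s <;> cases t <;>
      simp only [Dmem, tA, tB, Amat, Bmat, map_add, map_sub, map_smul, LinearMap.add_apply,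
        LinearMap.sub_apply, LinearMap.smul_apply, h1, h2, h3, h4, if_true,
        Bool.false_eq_true, if_false, smul_eq_mul]
    · simp
    · rw [scale _ (2 * (d i - d j))]
      · simp only [ne_eq, reduceCtorEq, not_false_eq_true, and_self, if_true]
        ring
      · push_cast
        linear_combination (-2 * ((d i : ℂ) - d j) * (2 * (√N : ℂ))⁻¹ * (2 * (√N : ℂ))⁻¹) *
          Complex.I_mul_I
    · rw [scale _ (-(2 * (d i - d j)))]
      · simp only [ne_eq, reduceCtorEq, not_false_eq_true, and_self, if_true]
        ring
      · push_cast
        linear_combination (2 * ((d i : ℂ) - d j) * (2 * (√N : ℂ))⁻¹ * (2 * (√N : ℂ))⁻¹) *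
          Complex.I_mul_I
    · simp
  · rw [if_neg (by omega)] at h2 h3
    rw [if_neg (by tauto)]
    cases s <;> cases t <;>
      simp [Dmem, tA, tB, Amat, Bmat, h1, h2, h3, h4]

/-- The sum of squares over a family indexed by `S × T` on which `d_i - d_j` has the constant
value `v`: each of the `2 · #S · #T` members has exactly one partner, contributing `v²`. -/
lemma sum_family {N k : ℕ} (hN : 0 < N) (d : ℕ → ℝ) (S T : Finset ℕ) (v : ℝ)
    (hS : ∀ i ∈ S, k ≤ i ∧ i < N) (hT : ∀ j ∈ T, j < k)
    (hv : ∀ i ∈ S, ∀ j ∈ T, d i - d j = v) :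
    ∑ p ∈ S ×ˢ T ×ˢ (Finset.univ : Finset Bool), ∑ q ∈ S ×ˢ T ×ˢ (Finset.univ : Finset Bool),
      (Bform N ⁅Dmem N p, Dmem N q⁆
        (Matrix.diagonal fun a : Fin N => Complex.I * (d a : ℂ))) ^ 2 =
      2 * S.card * T.card * v ^ 2 := by
  -- For each member `p` the only contribution is from the partner with the opposite flag.
  have key : ∀ p ∈ S ×ˢ T ×ˢ (Finset.univ : Finset Bool),
      ∑ q ∈ S ×ˢ T ×ˢ (Finset.univ : Finset Bool), (Bform N ⁅Dmem N p, Dmem N q⁆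
        (Matrix.diagonal fun a : Fin N => Complex.I * (d a : ℂ))) ^ 2 = v ^ 2 := by
    rintro ⟨i, j, s⟩ hp
    simp only [Finset.mem_product, Finset.mem_univ, and_true] at hp
    rw [Finset.sum_eq_single (i, j, !s)]
    · rw [Bform_lie_Dmem hN d s (!s) (hS i hp.1).1 (hS i hp.1).2 (hT j hp.2) (hS i hp.1).1
        (hT j hp.2), hv i hp.1 j hp.2]
      cases s <;> simp
    · rintro ⟨i', j', t⟩ hq hne
      simp only [Finset.mem_product, Finset.mem_univ, and_true] at hq
      rw [Bform_lie_Dmem hN d s t (hS i hp.1).1 (hS i hp.1).2 (hT j hp.2) (hS i' hq.1).1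
        (hT j' hq.2), if_neg]
      · simp
      · rintro ⟨rfl, rfl, h⟩
        apply hne
        cases s <;> cases t <;> simp_all
    · intro h
      exact absurd (by simp [hp]) h
  rw [Finset.sum_congr rfl key]
  simp only [Finset.sum_const, Finset.card_product, Finset.card_univ, Fintype.card_bool,
    nsmul_eq_mul]
  push_cast
  ring

/-- The real diagonal `d` with `c·Z̃4 + Z̃5 = √(-1)·diag d`. -/
def dvec (l m n : ℕ) (c : ℝ) (a : ℕ) : ℝ :=
  c * c4 l m n * (if a < l + m then 1 / ((l : ℝ) + m) else -(1 / (n : ℝ))) +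
    c5 l m n * (if a < l then 1 / (l : ℝ) else if a < l + m then -(1 / (m : ℝ)) else 0)

lemma Bform_comb (l m n : ℕ) (c : ℝ) (X : Matrix (Fin (l + m + n)) (Fin (l + m + n)) ℂ) :
    c * Bform (l + m + n) X (tZ4 l m n) + Bform (l + m + n) X (tZ5 l m n) =
      Bform (l + m + n) X
        (Matrix.diagonal fun a : Fin (l + m + n) => Complex.I * (dvec l m n c a : ℂ)) := by
  have h : (Matrix.diagonal fun a : Fin (l + m + n) => Complex.I * (dvec l m n c a : ℂ)) =
      (c : ℂ) • tZ4 l m n + tZ5 l m n := by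
    ext a b
    by_cases hab : a = b
    · subst hab
      simp only [Matrix.diagonal_apply_eq, Matrix.add_apply, Matrix.smul_apply, tZ4, tZ5, Z4mat,
        Z5mat, Matrix.of_apply, dvec, if_true, smul_eq_mul]
      split_ifs <;> push_cast <;> ring
    · simp [tZ4, tZ5, Z4mat, Z5mat, hab]
  rw [h]
  simp only [Bform, Matrix.mul_add, Matrix.mul_smul, Matrix.trace_add, Matrix.trace_smul,
    Complex.add_re, smul_eq_mul, Complex.re_ofReal_mul]
  ring

lemma c4_mul_c5 (l m n : ℕ) (hl : 0 < l) :
    c4 l m n * c5 l m n = Real.sqrt ((l : ℝ) * m * n) /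
      (2 * ((l : ℝ) + m + n) * Real.sqrt ((l : ℝ) + m + n)) := by
  have hl' : (0 : ℝ) < l := by exact_mod_cast hl
  have hlm : (0 : ℝ) < Real.sqrt ((l : ℝ) + m) := Real.sqrt_pos.2 (by positivity)
  have hN : (0 : ℝ) < Real.sqrt ((l : ℝ) + m + n) := Real.sqrt_pos.2 (by positivity)
  rw [c4, c5, Real.sqrt_mul (by positivity : (0 : ℝ) ≤ (l : ℝ) + m),
    Real.sqrt_mul (by positivity : (0 : ℝ) ≤ 2),
    Real.sqrt_mul (by positivity : (0 : ℝ) ≤ (l : ℝ) * m)]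
  field_simp
  rw [Real.sq_sqrt (by norm_num)]
  ring

/-- The structure constants of `M_{ℓ,m,n}` with respect to the invariant inner product
parametrized by the real number `c`. -/
theorem structure_constants_parametrized (l m n : ℕ)
    (hl : 0 < l) (hm : 0 < m) (hn : 0 < n) (c : ℝ) :
    let N := l + m + n
    let LR : ℝ := l; let MR : ℝ := m; let NR : ℝ := n
    (∑ p ∈ idx1 l m n, ∑ q ∈ idx1 l m n,
        (c * Bform N ⁅Dmem N p, Dmem N q⁆ (tZ4 l m n)
          + Bform N ⁅Dmem N p, Dmem N q⁆ (tZ5 l m n)) ^ 2 =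
        (LR + MR) / (LR + MR + NR)) ∧
    (∑ p ∈ idx2 l m n, ∑ q ∈ idx2 l m n,
        (c * Bform N ⁅Dmem N p, Dmem N q⁆ (tZ4 l m n)
          + Bform N ⁅Dmem N p, Dmem N q⁆ (tZ5 l m n)) ^ 2 =
        c ^ 2 * LR / (LR + MR) + MR * NR / ((LR + MR + NR) * (LR + MR))
          + 2 * c * Real.sqrt (LR * MR * NR) / ((LR + MR) * Real.sqrt (LR + MR + NR))) ∧
    (∑ p ∈ idx3 l m n, ∑ q ∈ idx3 l m n,
        (c * Bform N ⁅Dmem N p, Dmem N q⁆ (tZ4 l m n)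
          + Bform N ⁅Dmem N p, Dmem N q⁆ (tZ5 l m n)) ^ 2 =
        c ^ 2 * MR / (LR + MR) + LR * NR / ((LR + MR + NR) * (LR + MR))
          - 2 * c * Real.sqrt (LR * MR * NR) / ((LR + MR) * Real.sqrt (LR + MR + NR))) := by
  intro N LR MR NR
  have hL : (0 : ℝ) < LR := Nat.cast_pos.2 hl
  have hM : (0 : ℝ) < MR := Nat.cast_pos.2 hm
  have hR : (0 : ℝ) < NR := Nat.cast_pos.2 hn
  have hN : 0 < l + m + n := by omega
  have e4 : c4 l m n ^ 2 = (LR + MR) * NR / (2 * (LR + MR + NR) ^ 2) := c4_sq l m n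
  have e5 : c5 l m n ^ 2 = LR * MR / (2 * (LR + MR + NR) * (LR + MR)) := c5_sq l m n
  have e45 : c4 l m n * c5 l m n = Real.sqrt (LR * MR * NR) /
      (2 * (LR + MR + NR) * Real.sqrt (LR + MR + NR)) := c4_mul_c5 l m n hl
  have hsN : 0 < Real.sqrt (LR + MR + NR) := Real.sqrt_pos.2 (by positivity)
  simp only [N, Bform_comb]
  refine ⟨?_, ?_, ?_⟩
  · rw [idx1, sum_family (k := l) hN (dvec l m n c) _ _ (-(c5 l m n * (1 / MR + 1 / LR)))]
    · simp only [Nat.card_Ico, Finset.card_range, Nat.add_sub_cancel_left]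
      change 2 * MR * LR * _ = _
      rw [neg_sq, mul_pow, e5]
      field_simp
    · intro i hi
      simp only [Finset.mem_Ico] at hi
      omega
    · simp
    · intro i hi j hj
      simp only [Finset.mem_Ico, Finset.mem_range] at hi hj
      simp only [dvec]
      rw [if_pos (by omega), if_neg (by omega), if_pos (by omega), if_pos (by omega),
        if_pos (by omega)]
      ring
  · rw [idx2, sum_family (k := l + m) hN (dvec l m n c) _ _
      (-(c * c4 l m n * (1 / NR + 1 / (LR + MR)) + c5 l m n * (1 / LR)))]
    · simp only [Nat.card_Ico, Finset.card_range, Nat.add_sub_cancel_left]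
      change 2 * NR * LR * _ = _
      have expand : ∀ x y : ℝ, (-(c * c4 l m n * x + c5 l m n * y)) ^ 2 =
          c ^ 2 * c4 l m n ^ 2 * x ^ 2 + 2 * c * (c4 l m n * c5 l m n) * x * y
            + c5 l m n ^ 2 * y ^ 2 := by
        intro x y
        ring
      rw [expand, e4, e5, e45]
      field_simp
      ring
    · intro i hi
      simpa using hi
    · intro j hj
      simp only [Finset.mem_range] at hj
      omega
    · intro i hi j hj
      simp only [Finset.mem_Ico, Finset.mem_range] at hi hj
      simp only [dvec]
      rw [if_neg (by omega), if_neg (by omega), if_neg (by omega), if_pos (by omega),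
        if_pos (by omega)]
      ring
  · rw [idx3, sum_family (k := l + m) hN (dvec l m n c) _ _
      (-(c * c4 l m n * (1 / NR + 1 / (LR + MR)) + c5 l m n * -(1 / MR)))]
    · simp only [Nat.card_Ico, Nat.add_sub_cancel_left]
      change 2 * NR * MR * _ = _
      have expand : ∀ x y : ℝ, (-(c * c4 l m n * x + c5 l m n * y)) ^ 2 =
          c ^ 2 * c4 l m n ^ 2 * x ^ 2 + 2 * c * (c4 l m n * c5 l m n) * x * y
            + c5 l m n ^ 2 * y ^ 2 := by
        intro x y
        ring
      rw [expand, e4, e5, e45]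
      field_simp
      ring
    · intro i hi
      simpa using hi
    · intro j hj
      simp only [Finset.mem_Ico] at hj
      omega
    · intro i hi j hj
      simp only [Finset.mem_Ico] at hi hj
      simp only [dvec]
      rw [if_neg (by omega), if_neg (by omega), if_neg (by omega), if_pos (by omega),
        if_neg (by omega), if_pos (by omega)]
      ring
end
end

section
/- Let n ≥ 2 be an integer. Then the cubic h1(x) = (2n²+1)x³ − (4n²−1)x² + 4(n²+2)x − 4(2n²+1) is strictly increasing on ℝ and has exactly one real root α, which satisfies 1 < α < 2. Moreover, the cubic h2(x) = 4(2n²+1)x³ − 4(n²+2)x² + (4n²−1)x − (2n²+1) satisfies h2(x) = −x³·h1(1/x) for all x ≠ 0, and its unique real root is 1/α, which satisfies 1/2 < 1/α < 1. -/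
/-- The reciprocal cubic `h2`. -/
def h2 (n x : ℝ) : ℝ :=
  4 * (2 * n ^ 2 + 1) * x ^ 3 - 4 * (n ^ 2 + 2) * x ^ 2 + (4 * n ^ 2 - 1) * x
    - (2 * n ^ 2 + 1)

theorem h1_strictMono (n : ℝ) : StrictMono (h1 n) := by
  intro x y hxy
  have key : 0 < (2 * n ^ 2 + 1) * (x ^ 2 + x * y + y ^ 2) - (4 * n ^ 2 - 1) * (x + y)
      + 4 * (n ^ 2 + 2) := by
    -- multiply by three times the leading coefficient and complete the square in `x + y`
    have h : 0 < 3 * (2 * n ^ 2 + 1) * ((2 * n ^ 2 + 1) * (x ^ 2 + x * y + y ^ 2)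
        - (4 * n ^ 2 - 1) * (x + y) + 4 * (n ^ 2 + 2)) := by
      have e : 3 * (2 * n ^ 2 + 1) * ((2 * n ^ 2 + 1) * (x ^ 2 + x * y + y ^ 2)
          - (4 * n ^ 2 - 1) * (x + y) + 4 * (n ^ 2 + 2))
          = (3 * (2 * n ^ 2 + 1) * (x + y) / 2 - (4 * n ^ 2 - 1)) ^ 2
            + 3 * (2 * n ^ 2 + 1) ^ 2 * (x - y) ^ 2 / 4 + (8 * n ^ 4 + 68 * n ^ 2 + 23) := by
        ring
      rw [e]
      positivity
    exact pos_of_mul_pos_right h (by positivity)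
  have h := mul_pos (sub_pos.2 hxy) key
  unfold h1
  linarith

theorem h2_eq (n x : ℝ) (hx : x ≠ 0) : h2 n x = -x ^ 3 * h1 n (1 / x) := by
  unfold h1 h2
  field_simp
  ring

/-- For `n ≥ 2` the cubic `h1` is strictly increasing with a unique real root
`α ∈ (1,2)`; moreover `h2(x) = −x³·h1(1/x)` and the unique real root of `h2` is
`1/α ∈ (1/2, 1)`. -/
theorem h1_strictMono_unique_root (n : ℕ) (hn : 2 ≤ n) :
    StrictMono (h1 (n : ℝ)) ∧
    ∃ α : ℝ, h1 (n : ℝ) α = 0 ∧ 1 < α ∧ α < 2 ∧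
      (∀ x : ℝ, h1 (n : ℝ) x = 0 → x = α) ∧
      (∀ x : ℝ, x ≠ 0 → h2 (n : ℝ) x = -x ^ 3 * h1 (n : ℝ) (1 / x)) ∧
      h2 (n : ℝ) (1 / α) = 0 ∧ (∀ x : ℝ, h2 (n : ℝ) x = 0 → x = 1 / α) ∧
      1 / 2 < 1 / α ∧ 1 / α < 1 := by
  have hn' : (2 : ℝ) ≤ n := by exact_mod_cast hn
  have hmono := h1_strictMono (n : ℝ)
  have h1neg : h1 (n : ℝ) 1 < 0 := by unfold h1; nlinarith
  have h2pos : 0 < h1 (n : ℝ) 2 := by unfold h1; linarith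
  have hcont : Continuous (h1 (n : ℝ)) := by unfold h1; fun_prop
  obtain ⟨α, ⟨hα1, hα2⟩, hα⟩ :=
    intermediate_value_Ioo one_le_two hcont.continuousOn ⟨h1neg, h2pos⟩
  have huniq : ∀ x : ℝ, h1 (n : ℝ) x = 0 → x = α := fun x hx => hmono.injective (hx.trans hα.symm)
  have hα0 : 0 < α := by linarith
  refine ⟨hmono, α, hα, hα1, hα2, huniq, h2_eq _, ?_, ?_, ?_, ?_⟩
  · rw [h2_eq _ _ (one_div_ne_zero hα0.ne'), one_div_one_div, hα, mul_zero]
  · intro x hx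
    have hx0 : x ≠ 0 := by
      rintro rfl
      unfold h2 at hx
      nlinarith
    rw [h2_eq _ _ hx0] at hx
    have hr : h1 (n : ℝ) (1 / x) = 0 :=
      (mul_eq_zero.1 hx).resolve_left (neg_ne_zero.2 (pow_ne_zero 3 hx0))
    rw [← huniq _ hr, one_div_one_div]
  · exact one_div_lt_one_div_of_lt hα0 hα2
  · exact (div_lt_one hα0).2 hα1
end

section
/- Let n be a positive integer and take ℓ = m = n. Define g1(x1,x2) = (x1 − x2)·[(2n²+1)x1³ + x2·((2n²+1)x1² + 6x1 + (2n²+1)) − 6n²x1² + x2²·((2n²+1)x1 − 6n²) + (2n²+1)x1 + (2n²+1)x2³ − 6(n²+1)] and g2(x1,x2) = (x2 − 1)·[6(n²+1)x1³ − x2·((2n²+1)x1² + (2n²+1) + 6x1) − (2n²+1)x1² + x2²·(6n²x1 − (2n²+1)) + 6n²x1 − (2n²+1)x2³ − (2n²+1)]. Then for all x1, x2 > 0, the equalities t1(x1,x2,1) = t2(x1,x2,1) = t3(x1,x2,1) hold if and only if g1(x1,x2) = 0 and g2(x1,x2) = 0. -/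
/-!
With `S = x1² + x2² + 1` and `ℓ = m = n`, `x3 = 1`, each `t_i` is a fraction
`n² S · P_i / (12 x1 x2 (n² S + S - x_i²))`, where `P_i` is a quadratic polynomial in `x1, x2`
and the denominator is positive. Hence `t1 = t2` and `t2 = t3` can be cross-multiplied
after cancelling the common positive factor `n² S / (12 x1 x2)`. The polynomials obtained are
exactly `g1` and `-g2`. The closed forms of the `t_i` are the lemmas `t1_equal_params`,
`t2_equal_params` and `t3_equal_params`.
-/

noncomputable section

theorem t1_equal_params {a x y : ℝ} (ha : 0 < a) (hx : 0 < x) (hy : 0 < y) :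
    t1 a a a x y 1 = (a ^ 2 * (x ^ 2 + y ^ 2 + 1) / (12 * x * y)) *
      ((6 * y + x ^ 2 - y ^ 2 - 1) / (a ^ 2 * (x ^ 2 + y ^ 2 + 1) + y ^ 2 + 1)) := by
  have hq : 1 + q1 a a a x y 1 =
      (a ^ 2 * (x ^ 2 + y ^ 2 + 1) + y ^ 2 + 1) / (a ^ 2 * (x ^ 2 + y ^ 2 + 1)) := by
    unfold q1
    rw [show a * x ^ 2 + a * y ^ 2 + a * 1 ^ 2 = a * (x ^ 2 + y ^ 2 + 1) by ring]
    field_simp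
    ring
  have hr : r1 a a a x y 1 = (6 * y + x ^ 2 - y ^ 2 - 1) / (12 * x * y) := by
    unfold r1
    rw [show a + a + a = 3 * a by ring]
    field_simp
    ring
  rw [t1, hq, hr]
  field_simp

theorem t2_equal_params {a x y : ℝ} (ha : 0 < a) (hx : 0 < x) (hy : 0 < y) :
    t2 a a a x y 1 = (a ^ 2 * (x ^ 2 + y ^ 2 + 1) / (12 * x * y)) *
      ((6 * x + y ^ 2 - x ^ 2 - 1) / (a ^ 2 * (x ^ 2 + y ^ 2 + 1) + x ^ 2 + 1)) := by
  have hq : 1 + q2 a a a x y 1 =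
      (a ^ 2 * (x ^ 2 + y ^ 2 + 1) + x ^ 2 + 1) / (a ^ 2 * (x ^ 2 + y ^ 2 + 1)) := by
    unfold q2
    rw [show a * x ^ 2 + a * y ^ 2 + a * 1 ^ 2 = a * (x ^ 2 + y ^ 2 + 1) by ring]
    field_simp
    ring
  have hr : r2 a a a x y 1 = (6 * x + y ^ 2 - x ^ 2 - 1) / (12 * x * y) := by
    unfold r2
    rw [show a + a + a = 3 * a by ring]
    field_simp
    ring
  rw [t2, hq, hr]
  field_simp

theorem t3_equal_params {a x y : ℝ} (ha : 0 < a) (hx : 0 < x) (hy : 0 < y) :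
    t3 a a a x y 1 = (a ^ 2 * (x ^ 2 + y ^ 2 + 1) / (12 * x * y)) *
      ((6 * x * y + 1 - x ^ 2 - y ^ 2) / (a ^ 2 * (x ^ 2 + y ^ 2 + 1) + x ^ 2 + y ^ 2)) := by
  have hq : 1 + q3 a a a x y 1 =
      (a ^ 2 * (x ^ 2 + y ^ 2 + 1) + x ^ 2 + y ^ 2) / (a ^ 2 * (x ^ 2 + y ^ 2 + 1)) := by
    unfold q3
    rw [show a * x ^ 2 + a * y ^ 2 + a * 1 ^ 2 = a * (x ^ 2 + y ^ 2 + 1) by ring]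
    field_simp
    ring
  have hr : r3 a a a x y 1 = (6 * x * y + 1 - x ^ 2 - y ^ 2) / (12 * x * y) := by
    unfold r3
    rw [show a + a + a = 3 * a by ring]
    field_simp
    ring
  rw [t3, hq, hr]
  field_simp

/-- With `ℓ = m = n`, the normalized Einstein equations `t1 = t2 = t3` at `x3 = 1` are
equivalent to the vanishing of the two polynomials `g1` and `g2`. -/
theorem einstein_iff_g1_g2 (n : ℕ) (hn : 0 < n) (x1 x2 : ℝ) (hx1 : 0 < x1) (hx2 : 0 < x2) :
    let nr : ℝ := n
    let g1 : ℝ := (x1 - x2) *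
      ((2 * nr ^ 2 + 1) * x1 ^ 3
        + x2 * ((2 * nr ^ 2 + 1) * x1 ^ 2 + 6 * x1 + (2 * nr ^ 2 + 1))
        - 6 * nr ^ 2 * x1 ^ 2
        + x2 ^ 2 * ((2 * nr ^ 2 + 1) * x1 - 6 * nr ^ 2)
        + (2 * nr ^ 2 + 1) * x1 + (2 * nr ^ 2 + 1) * x2 ^ 3 - 6 * (nr ^ 2 + 1))
    let g2 : ℝ := (x2 - 1) *
      (6 * (nr ^ 2 + 1) * x1 ^ 3
        - x2 * ((2 * nr ^ 2 + 1) * x1 ^ 2 + (2 * nr ^ 2 + 1) + 6 * x1)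
        - (2 * nr ^ 2 + 1) * x1 ^ 2
        + x2 ^ 2 * (6 * nr ^ 2 * x1 - (2 * nr ^ 2 + 1))
        + 6 * nr ^ 2 * x1 - (2 * nr ^ 2 + 1) * x2 ^ 3 - (2 * nr ^ 2 + 1))
    (t1 nr nr nr x1 x2 1 = t2 nr nr nr x1 x2 1 ∧
      t2 nr nr nr x1 x2 1 = t3 nr nr nr x1 x2 1) ↔ (g1 = 0 ∧ g2 = 0) := by
  intro nr g1 g2
  have ha : 0 < nr := Nat.cast_pos.mpr hn
  have hc : nr ^ 2 * (x1 ^ 2 + x2 ^ 2 + 1) / (12 * x1 * x2) ≠ 0 := by positivity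
  have h1 : nr ^ 2 * (x1 ^ 2 + x2 ^ 2 + 1) + x2 ^ 2 + 1 ≠ 0 := by positivity
  have h2 : nr ^ 2 * (x1 ^ 2 + x2 ^ 2 + 1) + x1 ^ 2 + 1 ≠ 0 := by positivity
  have h3 : nr ^ 2 * (x1 ^ 2 + x2 ^ 2 + 1) + x1 ^ 2 + x2 ^ 2 ≠ 0 := by positivity
  rw [t1_equal_params ha hx1 hx2, t2_equal_params ha hx1 hx2, t3_equal_params ha hx1 hx2,
    mul_right_inj' hc, mul_right_inj' hc, div_eq_div_iff h1 h2, div_eq_div_iff h2 h3]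
  have e1 : (6 * x2 + x1 ^ 2 - x2 ^ 2 - 1) * (nr ^ 2 * (x1 ^ 2 + x2 ^ 2 + 1) + x1 ^ 2 + 1)
      - (6 * x1 + x2 ^ 2 - x1 ^ 2 - 1) * (nr ^ 2 * (x1 ^ 2 + x2 ^ 2 + 1) + x2 ^ 2 + 1) = g1 := by
    simp only [g1]
    ring
  have e2 : (6 * x1 + x2 ^ 2 - x1 ^ 2 - 1) * (nr ^ 2 * (x1 ^ 2 + x2 ^ 2 + 1) + x1 ^ 2 + x2 ^ 2)
      - (6 * x1 * x2 + 1 - x1 ^ 2 - x2 ^ 2) * (nr ^ 2 * (x1 ^ 2 + x2 ^ 2 + 1) + x1 ^ 2 + 1)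
      = -g2 := by
    simp only [g2]
    ring
  rw [← sub_eq_zero, e1, ← sub_eq_zero (a := _ * (_ + x1 ^ 2 + x2 ^ 2)), e2, neg_eq_zero]
end
end

section
/- Let n be a positive integer and let α > 0 be a real number with h1(α) = 0, where h1(x) = (2n²+1)x³ − (4n²−1)x² + 4(n²+2)x − 4(2n²+1). Then (2+α²)(4+α²)n² / (12α(2 + 2n² + α²n²)) = (6−α)(2+α²)n² / (12(1 + α² + 2n² + α²n²)). (These are the two expressions for the Einstein constant λ of the invariant Einstein metrics (1,α,1) and (α,1,1) on the C-space M_{n,n,n}, which therefore coincide.) -/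
/-- The two expressions for the Einstein constant `λ` of the invariant Einstein metrics
`(1,α,1)` and `(α,1,1)` on the C-space `M_{n,n,n}` coincide whenever `α > 0` is a root
of `h1`. -/
theorem einstein_constants_coincide (n : ℕ) (hn : 0 < n) (α : ℝ) (hα : 0 < α)
    (hroot : h1 (n : ℝ) α = 0) :
    (2 + α ^ 2) * (4 + α ^ 2) * (n : ℝ) ^ 2 /
        (12 * α * (2 + 2 * (n : ℝ) ^ 2 + α ^ 2 * (n : ℝ) ^ 2)) =
      (6 - α) * (2 + α ^ 2) * (n : ℝ) ^ 2 /
        (12 * (1 + α ^ 2 + 2 * (n : ℝ) ^ 2 + α ^ 2 * (n : ℝ) ^ 2)) := by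
  unfold h1 at hroot
  rw [div_eq_div_iff (by positivity) (by positivity)]
  -- After clearing denominators, the difference of the two sides is divisible by the cubic,
  -- with cofactor `12 (2 + α²) n² (α - 1)`.
  linear_combination 12 * (2 + α ^ 2) * (n : ℝ) ^ 2 * (α - 1) * hroot
end
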